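/- arXiv:1609.02490 — 5 statements merged into one kernel-verified Lean document; each statement's English description precedes it below -/
import Mathlib

section
/- Let n ≥ 3 be an integer, hence for n ≥ 4: there exist constants c_n, C_n > 0 depending only on n such that for every d and every γ = (γ₁,…,γ_d) with γ_i ∈ [0,1] for all i, if ‖γ‖₂² := ∑_i γ_i² > c_n, then for every T ≥ 1 the integral I(T) = ∫_T^∞ r² / √(∏_{i=1}^d (1+γ_i² r²)) dr satisfies I(T) ≤ C_n · (1/‖γ‖₂²)^{n/2} · T^{−(n−3)}. -/
open MeasureTheory Real

noncomputable section

/-- Greedy extraction of a sub-block with sum in `[b, b+1]`. -/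
lemma exists_block {ι : Type*} [DecidableEq ι] (a : ι → ℝ) (b : ℝ) (hb : 0 ≤ b) (s : Finset ι)
    (ha1 : ∀ i, a i ≤ 1) (h : b ≤ ∑ i ∈ s, a i) :
    ∃ t ⊆ s, b ≤ ∑ i ∈ t, a i ∧ ∑ i ∈ t, a i ≤ b + 1 := by
  induction s using Finset.induction_on with
  | empty =>
    refine ⟨∅, le_rfl, h, ?_⟩
    simp
    linarith
  | insert j s hj ih =>
    by_cases hs : b ≤ ∑ i ∈ s, a i
    · obtain ⟨t, ht, h1, h2⟩ := ih hs
      exact ⟨t, ht.trans (Finset.subset_insert _ _), h1, h2⟩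
    · refine ⟨insert j s, le_rfl, h, ?_⟩
      rw [Finset.sum_insert hj]
      have := ha1 j
      linarith

lemma one_add_sum_le {ι : Type*} [DecidableEq ι] (a : ι → ℝ) (x : ℝ) (hx : 0 ≤ x)
    (ha0 : ∀ i, 0 ≤ a i) (s : Finset ι) :
    1 + (∑ i ∈ s, a i) * x ≤ ∏ i ∈ s, (1 + a i * x) := by
  induction s using Finset.induction_on with
  | empty => simp
  | insert j s hj ih =>
    rw [Finset.sum_insert hj, Finset.prod_insert hj]
    have h1 : 0 ≤ a j * x := mul_nonneg (ha0 j) hx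
    have h2 : 0 ≤ (∑ i ∈ s, a i) * x := mul_nonneg (Finset.sum_nonneg fun i _ => ha0 i) hx
    nlinarith [mul_le_mul_of_nonneg_left ih (by linarith : 0 ≤ 1 + a j * x), mul_nonneg h1 h2]

lemma pow_le_prod_block {ι : Type*} [DecidableEq ι] (a : ι → ℝ) (x : ℝ) (hx : 0 ≤ x)
    (ha0 : ∀ i, 0 ≤ a i) (ha1 : ∀ i, a i ≤ 1) (b : ℝ) (hb : 0 ≤ b) (n : ℕ) :
    ∀ s : Finset ι, n * (b + 1) ≤ ∑ i ∈ s, a i → (b * x) ^ n ≤ ∏ i ∈ s, (1 + a i * x) := by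
  induction n with
  | zero =>
    intro s _
    have h := one_add_sum_le a x hx ha0 s
    have h2 : 0 ≤ (∑ i ∈ s, a i) * x := mul_nonneg (Finset.sum_nonneg fun i _ => ha0 i) hx
    simp only [pow_zero]
    linarith
  | succ n ih =>
    intro s hs
    push_cast at hs
    have hn : 0 ≤ (n : ℝ) * (b + 1) := by positivity
    obtain ⟨t, ht, h1, h2⟩ := exists_block a b hb s ha1 (by linarith)
    have hsum := Finset.sum_sdiff (f := a) ht
    rw [← Finset.prod_sdiff ht, pow_succ]
    have h3 := ih (s \ t) (by linarith)
    have h4 := one_add_sum_le a x hx ha0 t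
    have h5 := mul_le_mul_of_nonneg_right h1 hx
    have h6 : 0 ≤ b * x := mul_nonneg hb hx
    exact mul_le_mul h3 (by linarith) h6 (le_trans (by positivity) h3)

/-- Lemma 2. For `n ≥ 4` there are constants `c_n, C_n > 0` such that
for every `γ` with entries in `[0,1]` and `‖γ‖₂² > c_n`, for all `T ≥ 1`,
`∫_T^∞ r²/√(∏ᵢ(1+γᵢ²r²)) dr ≤ C_n (1/‖γ‖₂²)^{n/2} T^{-(n-3)}`. -/
theorem integral_tail_bound (n : ℕ) (hn : 4 ≤ n) :
    ∃ c > (0 : ℝ), ∃ C > (0 : ℝ),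
      ∀ (d : ℕ) (γ : Fin d → ℝ),
        (∀ i, γ i ∈ Set.Icc (0 : ℝ) 1) →
        (∑ i, γ i ^ 2) > c →
        ∀ T : ℝ, 1 ≤ T →
          (∫ r in Set.Ioi T, r ^ 2 / Real.sqrt (∏ i, (1 + γ i ^ 2 * r ^ 2)))
            ≤ C * (1 / ∑ i, γ i ^ 2) ^ ((n : ℝ) / 2) * (1 / T ^ (n - 3)) := by
  have hn' : (4 : ℝ) ≤ n := by exact_mod_cast hn
  refine ⟨2 * n, by positivity, (2 * n : ℝ) ^ ((n : ℝ) / 2), by positivity, ?_⟩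
  intro d γ hγ hS T hT
  set S := ∑ i, γ i ^ 2 with hSdef
  have hSpos : 0 < S := by linarith
  have hT0 : 0 < T := by linarith
  set b : ℝ := S / (2 * n) with hbdef
  have hb : 0 < b := by positivity
  have hnb : (n : ℝ) * (b + 1) ≤ S := by
    have : (n : ℝ) * b = S / 2 := by rw [hbdef]; field_simp
    rw [mul_add, this]; linarith
  have hconst : (2 * n : ℝ) ^ ((n : ℝ) / 2) * (1 / S) ^ ((n : ℝ) / 2) = b ^ (-((n : ℝ) / 2)) := by
    rw [← Real.mul_rpow (by positivity) (by positivity), Real.rpow_neg hb.le,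
      ← Real.inv_rpow hb.le]
    congr 1
    rw [hbdef, inv_div]; ring
  rw [hconst]
  have hlt : (2 - (n : ℝ)) < -1 := by linarith
  have hint : IntegrableOn (fun r : ℝ => b ^ (-((n : ℝ) / 2)) * r ^ (2 - (n : ℝ))) (Set.Ioi T) :=
    (integrableOn_Ioi_rpow_of_lt hlt hT0).const_mul _
  have hbound : ∀ r ∈ Set.Ioi T, r ^ 2 / Real.sqrt (∏ i, (1 + γ i ^ 2 * r ^ 2))
      ≤ b ^ (-((n : ℝ) / 2)) * r ^ (2 - (n : ℝ)) := by
    intro r hr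
    have hr0 : 0 < r := lt_trans hT0 hr
    have h1 := pow_le_prod_block (fun i => γ i ^ 2) (r ^ 2) (by positivity)
      (fun i => by positivity) (fun i => pow_le_one₀ (hγ i).1 (hγ i).2) b hb.le n Finset.univ hnb
    have h2 : b ^ ((n : ℝ) / 2) * r ^ (n : ℝ) ≤ Real.sqrt (∏ i, (1 + γ i ^ 2 * r ^ 2)) := by
      apply Real.le_sqrt_of_sq_le
      refine le_trans (le_of_eq ?_) h1
      rw [mul_pow, mul_pow, Real.rpow_natCast, ← Real.rpow_natCast (b ^ _) 2,
        ← Real.rpow_mul hb.le, ← pow_mul, ← pow_mul, mul_comm n 2, ← Real.rpow_natCast b n]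
      congr 2
      push_cast; ring
    have h3 : 0 < b ^ ((n : ℝ) / 2) * r ^ (n : ℝ) := by positivity
    refine le_trans (div_le_div_of_nonneg_left (by positivity) h3 h2) (le_of_eq ?_)
    rw [Real.rpow_neg hb.le, Real.rpow_sub hr0, Real.rpow_two]
    field_simp
  have hmono : (∫ r in Set.Ioi T, r ^ 2 / Real.sqrt (∏ i, (1 + γ i ^ 2 * r ^ 2)))
      ≤ ∫ r in Set.Ioi T, b ^ (-((n : ℝ) / 2)) * r ^ (2 - (n : ℝ)) := by
    apply integral_mono_of_nonneg
    · exact Filter.Eventually.of_forall fun r => by positivity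
    · exact hint
    · exact (ae_restrict_iff' measurableSet_Ioi).2 (Filter.Eventually.of_forall hbound)
  refine hmono.trans ?_
  rw [integral_const_mul, integral_Ioi_rpow_of_lt hlt hT0]
  refine mul_le_mul_of_nonneg_left ?_ (by positivity)
  have he : (2 - (n : ℝ)) + 1 = -((n - 3 : ℕ) : ℝ) := by
    rw [Nat.cast_sub (by omega)]; push_cast; ring
  rw [he, Real.rpow_neg hT0.le, Real.rpow_natCast, neg_div_neg_eq, one_div]
  apply div_le_self (by positivity)
  exact_mod_cast (by omega : 1 ≤ n - 3)

end
end

section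
/- Let n ≥ 1 and let γ = (γ₁,…,γ_d) be a finite sequence of reals with γ_i ∈ [0,1] for all i and ∑_i γ_i² ≥ n. Then the elementary symmetric sum of order n of the squares satisfies ∑_{S ⊆ {1,…,d}, |S| = n} ∏_{j ∈ S} γ_j² ≥ (1/n!) ∏_{k=0}^{n−1} (‖γ‖₂² − k), where ‖γ‖₂² = ∑_{i=1}^d γ_i². -/
open Finset

lemma esymm_step {d : ℕ} (x : Fin d → ℝ) (m : ℕ) :
    ((m : ℝ) + 1) * ∑ T ∈ (Finset.univ : Finset (Fin d)).powersetCard (m + 1), ∏ j ∈ T, x j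
      = ∑ S ∈ (Finset.univ : Finset (Fin d)).powersetCard m, (∏ j ∈ S, x j) * ∑ j ∈ Sᶜ, x j := by
  have h1 : ((m : ℝ) + 1) * ∑ T ∈ (Finset.univ : Finset (Fin d)).powersetCard (m + 1), ∏ j ∈ T, x j
      = ∑ T ∈ (Finset.univ : Finset (Fin d)).powersetCard (m + 1), ∑ _i ∈ T, ∏ j ∈ T, x j := by
    rw [Finset.mul_sum]
    refine Finset.sum_congr rfl fun T hT => ?_
    rw [Finset.sum_const, (Finset.mem_powersetCard.1 hT).2, nsmul_eq_mul]
    push_cast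
    rfl
  rw [h1]
  simp_rw [Finset.mul_sum]
  rw [Finset.sum_sigma', Finset.sum_sigma']
  refine Finset.sum_bij' (fun p _ => ⟨p.1.erase p.2, p.2⟩) (fun p _ => ⟨insert p.2 p.1, p.2⟩)
    ?_ ?_ ?_ ?_ ?_
  · rintro ⟨T, i⟩ h
    simp only [Finset.mem_sigma, Finset.mem_powersetCard, Finset.mem_compl] at h ⊢
    refine ⟨⟨Finset.subset_univ _, ?_⟩, by simp⟩
    rw [Finset.card_erase_of_mem h.2, h.1.2]
    rfl
  · rintro ⟨T, i⟩ h
    simp only [Finset.mem_sigma, Finset.mem_powersetCard, Finset.mem_compl] at h ⊢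
    refine ⟨⟨Finset.subset_univ _, ?_⟩, by simp⟩
    rw [Finset.card_insert_of_notMem h.2, h.1.2]
  · rintro ⟨T, i⟩ h
    simp only [Finset.mem_sigma] at h
    simp [Finset.insert_erase h.2]
  · rintro ⟨T, i⟩ h
    simp only [Finset.mem_sigma, Finset.mem_compl] at h
    simp [Finset.erase_insert h.2]
  · rintro ⟨T, i⟩ h
    simp only [Finset.mem_sigma] at h
    exact (Finset.prod_erase_mul T x h.2).symm

lemma esymm_bound {d : ℕ} (x : Fin d → ℝ) (h0 : ∀ i, 0 ≤ x i) (h1 : ∀ i, x i ≤ 1) (m : ℕ)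
    (hs : (m : ℝ) ≤ ∑ i, x i) :
    ∏ k ∈ Finset.range m, ((∑ i, x i) - (k : ℝ))
      ≤ (m.factorial : ℝ) * ∑ S ∈ Finset.univ.powersetCard m, ∏ j ∈ S, x j := by
  induction m with
  | zero => simp
  | succ m ih =>
    push_cast at hs
    have ih' := ih (by linarith)
    rw [Finset.prod_range_succ, Nat.factorial_succ]
    push_cast
    have key : (∑ S ∈ Finset.univ.powersetCard m, ∏ j ∈ S, x j) * ((∑ i, x i) - (m : ℝ))
        ≤ ((m : ℝ) + 1) * ∑ S ∈ Finset.univ.powersetCard (m + 1), ∏ j ∈ S, x j := by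
      rw [esymm_step, Finset.sum_mul]
      refine Finset.sum_le_sum fun S hS => ?_
      refine mul_le_mul_of_nonneg_left ?_ (Finset.prod_nonneg fun i _ => h0 i)
      have h2 := Finset.sum_add_sum_compl S x
      have h3 : ∑ i ∈ S, x i ≤ (m : ℝ) := by
        have := Finset.sum_le_card_nsmul S x 1 (fun i _ => h1 i)
        rw [(Finset.mem_powersetCard.1 hS).2] at this
        simpa using this
      linarith
    have hf : (0 : ℝ) ≤ (m.factorial : ℝ) := by positivity
    have a1 := mul_le_mul_of_nonneg_right ih' (show 0 ≤ (∑ i, x i) - (m : ℝ) by linarith)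
    have a2 := mul_le_mul_of_nonneg_left key hf
    calc _ ≤ _ := a1
      _ = _ := mul_assoc _ _ _
      _ ≤ _ := a2
      _ = _ := by ring

/-- inequality (8). If `γ_i ∈ [0,1]` and `∑ γ_i² ≥ n ≥ 1`, then the
elementary symmetric sum of order `n` of the `γ_i²` is at least
`(1/n!) ∏_{k=0}^{n-1} (‖γ‖₂² - k)`. -/
theorem esymm_sq_lower_bound (n : ℕ) (hn : 1 ≤ n) (d : ℕ) (γ : Fin d → ℝ)
    (hγ : ∀ i, γ i ∈ Set.Icc (0 : ℝ) 1)
    (hsum : (n : ℝ) ≤ ∑ i, γ i ^ 2) :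
    (1 / (n.factorial : ℝ)) * ∏ k ∈ Finset.range n, ((∑ i, γ i ^ 2) - (k : ℝ))
      ≤ ∑ S ∈ Finset.univ.powersetCard n, ∏ j ∈ S, γ j ^ 2 := by
  have h := esymm_bound (fun i => γ i ^ 2) (fun i => sq_nonneg _)
    (fun i => pow_le_one₀ (hγ i).1 (hγ i).2) n hsum
  have hf : (0 : ℝ) < (n.factorial : ℝ) := by positivity
  rw [one_div, inv_mul_le_iff₀ hf]
  exact h
end

section
/- There exists a constant c_{1/2} > 0 such that for every α ∈ ℝ^d with entries in [0,1], at least one entry equal to 1, and ‖α‖₂² > c_{1/2}, the Cauchy principal value PV ∫_{ℝ³} (i/(abc)) ∏_{i=1}^d (1 + α_i²(a²+b²+c²) + 2α_i³abc·i)^{−1/2} da db dc is a real number and is at least (1/8)·(‖α‖₃/‖α‖₂)³. -/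
open MeasureTheory ProbabilityTheory Real Filter
open scoped Classical ENNReal NNReal

noncomputable section

/-- Euclidean inner product on `Fin d → ℝ`. -/
def dotp {d : ℕ} (x y : Fin d → ℝ) : ℝ := ∑ i, x i * y i

/-- The `q`-norm of a vector `α ∈ ℝ^d`. -/
def nrm {d : ℕ} (q : ℕ) (α : Fin d → ℝ) : ℝ := (∑ i, α i ^ q) ^ ((1 : ℝ) / q)

/-- The centered Gaussian measure `N(0, D_α)` on `ℝ^d`, `D_α = diag α`. -/
def gaussPi (d : ℕ) (α : Fin d → ℝ) : Measure (Fin d → ℝ) :=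
  Measure.pi fun i => gaussianReal 0 (Real.toNNReal (α i))

/-- The law of `n` i.i.d. samples from `N(0, D_α)`. -/
def sampleMeasure (n d : ℕ) (α : Fin d → ℝ) : Measure (Fin n → Fin d → ℝ) :=
  Measure.pi fun _ => gaussPi d α

/-- `t` is the `p`-th upper quantile of `⟨X₁, X₂⟩` for `X₁, X₂` i.i.d. `N(0, D_α)`. -/
def IsThreshold (d : ℕ) (α : Fin d → ℝ) (p t : ℝ) : Prop :=
  ((gaussPi d α).prod (gaussPi d α)) {xy | t ≤ dotp xy.1 xy.2} = ENNReal.ofReal p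

instance (n : ℕ) : MeasurableSpace (SimpleGraph (Fin n)) := ⊤

/-- The anisotropic random geometric graph `G(n, p, α)`, with threshold `t = t_{p,α}`. -/
def geomGraph (n d : ℕ) (α : Fin d → ℝ) (t : ℝ) : Measure (SimpleGraph (Fin n)) :=
  Measure.map (fun X => SimpleGraph.fromRel fun i j => t ≤ dotp (X i) (X j))
    (sampleMeasure n d α)

/-- The Erdős–Rényi random graph `G(n, p)`. -/
def erGraph (n : ℕ) (p : ℝ) : Measure (SimpleGraph (Fin n)) :=
  Measure.map (fun x => SimpleGraph.fromRel fun i j => x s(i, j) ≤ p)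
    (Measure.pi fun _ : Sym2 (Fin n) => volume.restrict (Set.Icc (0 : ℝ) 1))

/-- Total variation distance between two measures. -/
def tvDist {Ω : Type*} [MeasurableSpace Ω] (μ ν : Measure Ω) : ℝ :=
  ⨆ s : {s : Set Ω // MeasurableSet s}, |(μ s.1).toReal - (ν s.1).toReal|

/-- Cauchy principal value of a triple integral:
`∫₀^∞∫₀^∞∫₀^∞ Δ_c Δ_b Δ_a g`, where `Δ_a g(a,b,c) = g(a,b,c) + g(-a,b,c)`, etc. -/
def pv3 (g : ℝ → ℝ → ℝ → ℂ) : ℂ :=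
  ∫ a in Set.Ioi (0 : ℝ), ∫ b in Set.Ioi (0 : ℝ), ∫ c in Set.Ioi (0 : ℝ),
    (g a b c + g (-a) b c + g a (-b) c + g a b (-c)
      + g (-a) (-b) c + g (-a) b (-c) + g a (-b) (-c) + g (-a) (-b) (-c))

/-- `∏_i (1 + α_i²(a²+b²+c²) + 2α_i³abc·i)^{-1/2}`, principal branch. -/
def wishChar (d : ℕ) (α : Fin d → ℝ) (a b c : ℝ) : ℂ :=
  ∏ i, ((1 : ℂ) + (α i : ℂ) ^ 2 * ((a : ℂ) ^ 2 + (b : ℂ) ^ 2 + (c : ℂ) ^ 2)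
      + 2 * (α i : ℂ) ^ 3 * (a : ℂ) * (b : ℂ) * (c : ℂ) * Complex.I) ^ (-(1 / 2 : ℂ))


/-! ### Helper lemmas -/

/-- One factor of the characteristic function, in terms of `x = α_i`, `s = a²+b²+c²`, `p = abc`. -/
def zf (x s p : ℝ) : ℂ := ⟨1 + x ^ 2 * s, 2 * x ^ 3 * p⟩

def Mf (d : ℕ) (α : Fin d → ℝ) (s p : ℝ) : ℝ :=
  Real.exp (-(1 / 2) * ∑ i, Real.log ‖zf (α i) s p‖)

def Tf (d : ℕ) (α : Fin d → ℝ) (s p : ℝ) : ℝ := (1 / 2) * ∑ i, (zf (α i) s p).arg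

/-- The (real) symmetrized integrand. -/
def Hf (d : ℕ) (α : Fin d → ℝ) (v : ℝ × ℝ × ℝ) : ℝ :=
  8 * Mf d α (v.1 ^ 2 + v.2.1 ^ 2 + v.2.2 ^ 2) (v.1 * v.2.1 * v.2.2)
    * Real.sin (Tf d α (v.1 ^ 2 + v.2.1 ^ 2 + v.2.2 ^ 2) (v.1 * v.2.1 * v.2.2))
    / (v.1 * v.2.1 * v.2.2)

lemma zf_re_pos {x s p : ℝ} (hs : 0 ≤ s) : 0 < (zf x s p).re := by
  simp only [zf]; positivity

lemma zf_ne {x s p : ℝ} (hs : 0 ≤ s) : zf x s p ≠ 0 := by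
  intro h
  have := zf_re_pos (x := x) (p := p) hs
  rw [h] at this
  simp at this

lemma zf_norm_pos {x s p : ℝ} (hs : 0 ≤ s) : 0 < ‖zf x s p‖ := norm_pos_iff.2 (zf_ne hs)

lemma zf_neg (x s p : ℝ) : zf x s (-p) = (starRingEnd ℂ) (zf x s p) := by
  apply Complex.ext <;> simp [zf]

lemma zf_abs_arg {x s p : ℝ} (hs : 0 ≤ s) : |(zf x s p).arg| < π / 2 :=
  Complex.abs_arg_lt_pi_div_two_iff.2 (Or.inl (zf_re_pos hs))

lemma Mf_neg (d : ℕ) (α : Fin d → ℝ) (s p : ℝ) : Mf d α s (-p) = Mf d α s p := by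
  simp [Mf, zf_neg]

lemma Tf_neg (d : ℕ) (α : Fin d → ℝ) {s : ℝ} (hs : 0 ≤ s) (p : ℝ) :
    Tf d α s (-p) = - Tf d α s p := by
  simp only [Tf, zf_neg]
  rw [← mul_neg, ← Finset.sum_neg_distrib]
  congr 1
  refine Finset.sum_congr rfl fun i _ => ?_
  rw [Complex.arg_conj, if_neg]
  have := zf_abs_arg (x := α i) (p := p) hs
  intro h
  rw [h, abs_of_pos pi_pos] at this
  linarith [pi_pos]

lemma wishChar_eq (d : ℕ) (α : Fin d → ℝ) (a b c : ℝ) :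
    wishChar d α a b c = (Mf d α (a ^ 2 + b ^ 2 + c ^ 2) (a * b * c) : ℂ) *
      Complex.exp (-(Tf d α (a ^ 2 + b ^ 2 + c ^ 2) (a * b * c) : ℂ) * Complex.I) := by
  have hs : 0 ≤ a ^ 2 + b ^ 2 + c ^ 2 := by positivity
  have h1 : ∀ i, ((1 : ℂ) + (α i : ℂ) ^ 2 * ((a : ℂ) ^ 2 + (b : ℂ) ^ 2 + (c : ℂ) ^ 2)
      + 2 * (α i : ℂ) ^ 3 * (a : ℂ) * (b : ℂ) * (c : ℂ) * Complex.I)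
      = zf (α i) (a ^ 2 + b ^ 2 + c ^ 2) (a * b * c) := by
    intro i
    have : zf (α i) (a ^ 2 + b ^ 2 + c ^ 2) (a * b * c) =
      ((1 + (α i) ^ 2 * (a ^ 2 + b ^ 2 + c ^ 2) : ℝ) : ℂ) +
        ((2 * (α i) ^ 3 * (a * b * c) : ℝ) : ℂ) * Complex.I := by
      apply Complex.ext <;> simp only [zf, Complex.add_re, Complex.add_im, Complex.re_ofReal_mul,
        Complex.im_ofReal_mul, Complex.ofReal_re, Complex.ofReal_im, Complex.I_re, Complex.I_im] <;>
        ring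
    rw [this]
    push_cast
    ring
  simp only [wishChar, h1]
  simp only [fun i => Complex.cpow_def_of_ne_zero
    (zf_ne (x := α i) (p := a * b * c) hs) (-(1 / 2 : ℂ))]
  rw [← Complex.exp_sum, Mf, Complex.ofReal_exp, ← Complex.exp_add]
  congr 1
  rw [← Finset.sum_mul]
  simp only [Complex.log, Tf, Finset.sum_add_distrib, ← Finset.sum_mul]
  push_cast
  ring

lemma integrand_eq (d : ℕ) (α : Fin d → ℝ) {a b c : ℝ} (ha : 0 < a) (hb : 0 < b) (hc : 0 < c)
    (g : ℝ → ℝ → ℝ → ℂ) (hg : g = fun a b c : ℝ =>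
          Complex.I / ((a : ℂ) * (b : ℂ) * (c : ℂ)) * wishChar d α a b c) :
    g a b c + g (-a) b c + g a (-b) c + g a b (-c)
      + g (-a) (-b) c + g (-a) b (-c) + g a (-b) (-c) + g (-a) (-b) (-c)
      = ((Hf d α (a, b, c) : ℝ) : ℂ) := by
  have hs : 0 ≤ a ^ 2 + b ^ 2 + c ^ 2 := by positivity
  subst hg
  simp only [wishChar_eq, neg_mul, mul_neg, neg_neg, Mf_neg, Tf_neg d α hs, neg_sq,
    Complex.ofReal_neg, Hf]
  set M := Mf d α (a ^ 2 + b ^ 2 + c ^ 2) (a * b * c)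
  set T := Tf d α (a ^ 2 + b ^ 2 + c ^ 2) (a * b * c)
  have ha' : (a : ℂ) ≠ 0 := by exact_mod_cast ha.ne'
  have hb' : (b : ℂ) ≠ 0 := by exact_mod_cast hb.ne'
  have hc' : (c : ℂ) ≠ 0 := by exact_mod_cast hc.ne'
  push_cast
  rw [Complex.sin]
  field_simp
  ring_nf
  try simp only [Complex.I_sq]
  try ring_nf

lemma Mf_le {d : ℕ} {α : Fin d → ℝ} {s p : ℝ}
    (hα : ∀ i, α i ∈ Set.Icc (0 : ℝ) 1) (hs : 0 ≤ s) : Mf d α s p ≤ Real.exp (-(∑ i, α i ^ 2) / 2 * Real.log (1 + s)) := by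
  rw [Mf]
  apply Real.exp_le_exp.2
  have : ∀ i ∈ Finset.univ, α i ^ 2 * Real.log (1 + s) ≤ Real.log ‖zf (α i) s p‖ := by
    intro i _
    obtain ⟨h0, h1⟩ := hα i
    rw [← Real.log_rpow (by linarith)]
    apply Real.log_le_log (by positivity)
    refine (rpow_one_add_le_one_add_mul_self (by linarith) (by positivity)
      (by nlinarith)).trans ?_
    have := Complex.re_le_norm (zf (α i) s p)
    simpa [zf] using this
  have := Finset.sum_le_sum this
  rw [← Finset.sum_mul] at this
  linarith

lemma zf_norm_le {d : ℕ} {α : Fin d → ℝ} {s p : ℝ}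
    (hα : ∀ i, α i ∈ Set.Icc (0 : ℝ) 1) (hs : 0 ≤ s) (hp : 0 ≤ p) (i : Fin d) : ‖zf (α i) s p‖ ≤ 1 + α i ^ 2 * (s + 2 * p) := by
  obtain ⟨h0, h1⟩ := hα i
  refine (Complex.norm_le_abs_re_add_abs_im _).trans ?_
  simp only [zf]
  rw [abs_of_nonneg (by positivity), abs_of_nonneg (by positivity)]
  have : α i ^ 3 ≤ α i ^ 2 := pow_le_pow_of_le_one h0 h1 (by norm_num)
  nlinarith

lemma le_Mf {d : ℕ} {α : Fin d → ℝ} {s p : ℝ}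
    (hα : ∀ i, α i ∈ Set.Icc (0 : ℝ) 1) (hs : 0 ≤ s) (hp : 0 ≤ p) : Real.exp (-((∑ i, α i ^ 2) * (s + 2 * p)) / 2) ≤ Mf d α s p := by
  rw [Mf]
  apply Real.exp_le_exp.2
  have : ∀ i ∈ Finset.univ, Real.log ‖zf (α i) s p‖ ≤ α i ^ 2 * (s + 2 * p) := by
    intro i _
    have := Real.log_le_sub_one_of_pos (zf_norm_pos (x := α i) (p := p) hs)
    have := zf_norm_le hα hs hp i
    linarith
  have := Finset.sum_le_sum this
  rw [← Finset.sum_mul] at this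
  linarith

lemma zf_arg_nonneg {d : ℕ} {α : Fin d → ℝ} {s p : ℝ}
    (hα : ∀ i, α i ∈ Set.Icc (0 : ℝ) 1) (hp : 0 ≤ p) (i : Fin d) : 0 ≤ (zf (α i) s p).arg := by
  obtain ⟨h0, h1⟩ := hα i
  rw [Complex.arg_nonneg_iff]
  simp only [zf]; positivity

lemma zf_arg_le {d : ℕ} {α : Fin d → ℝ} {s p : ℝ}
    (hα : ∀ i, α i ∈ Set.Icc (0 : ℝ) 1) (hs : 0 ≤ s) (hp : 0 ≤ p) (i : Fin d) : (zf (α i) s p).arg ≤ 2 * α i ^ 3 * p := by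
  obtain ⟨h0, h1⟩ := hα i
  refine (Real.le_tan (zf_arg_nonneg hα hp i) (abs_lt.1 (zf_abs_arg hs)).2).trans ?_
  rw [Complex.tan_arg]
  refine div_le_self ?_ ?_
  · simp only [zf]; positivity
  · simp only [zf]; nlinarith [mul_nonneg (sq_nonneg (α i)) hs]

lemma le_zf_arg {d : ℕ} {α : Fin d → ℝ} {s p : ℝ}
    (hα : ∀ i, α i ∈ Set.Icc (0 : ℝ) 1) (hs : 0 ≤ s) (hp : 0 ≤ p) (h2 : s + 2 * p ≤ 1) (i : Fin d) : α i ^ 3 * p ≤ (zf (α i) s p).arg := by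
  obtain ⟨h0, h1⟩ := hα i
  refine le_trans ?_ (Real.sin_le (zf_arg_nonneg hα hp i))
  rw [Complex.sin_arg, le_div_iff₀ (zf_norm_pos hs)]
  have h3 := zf_norm_le hα hs hp i
  have h4 : α i ^ 2 * (s + 2 * p) ≤ 1 := by
    have : α i ^ 2 ≤ 1 := by nlinarith
    nlinarith [sq_nonneg (α i)]
  have h5 : 0 ≤ α i ^ 3 * p := by positivity
  have h6 : α i ^ 3 * p * ‖zf (α i) s p‖ ≤ α i ^ 3 * p * 2 :=
    mul_le_mul_of_nonneg_left (by linarith) h5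
  simp only [zf] at h6 ⊢
  linarith

lemma Tf_nonneg {d : ℕ} {α : Fin d → ℝ} {s p : ℝ}
    (hα : ∀ i, α i ∈ Set.Icc (0 : ℝ) 1) (hp : 0 ≤ p) : 0 ≤ Tf d α s p :=
  mul_nonneg (by norm_num) (Finset.sum_nonneg fun i _ => zf_arg_nonneg hα hp i)

lemma Tf_le {d : ℕ} {α : Fin d → ℝ} {s p : ℝ}
    (hα : ∀ i, α i ∈ Set.Icc (0 : ℝ) 1) (hs : 0 ≤ s) (hp : 0 ≤ p) : Tf d α s p ≤ (∑ i, α i ^ 3) * p := by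
  have := Finset.sum_le_sum (fun i (_ : i ∈ Finset.univ) => zf_arg_le hα hs hp i)
  rw [← Finset.sum_mul, ← Finset.mul_sum] at this
  rw [Tf]; linarith

lemma le_Tf {d : ℕ} {α : Fin d → ℝ} {s p : ℝ}
    (hα : ∀ i, α i ∈ Set.Icc (0 : ℝ) 1) (hs : 0 ≤ s) (hp : 0 ≤ p) (h2 : s + 2 * p ≤ 1) : (∑ i, α i ^ 3) * p / 2 ≤ Tf d α s p := by
  have := Finset.sum_le_sum (fun i (_ : i ∈ Finset.univ) => le_zf_arg hα hs hp h2 i)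
  rw [← Finset.sum_mul] at this
  rw [Tf]; linarith

lemma Mf_pos (d : ℕ) (α : Fin d → ℝ) (s p : ℝ) : 0 < Mf d α s p := Real.exp_pos _

/-- absolute bound -/
lemma abs_Hf_le {d : ℕ} {α : Fin d → ℝ} (hα : ∀ i, α i ∈ Set.Icc (0 : ℝ) 1) {a b c : ℝ}
    (ha : 0 < a) (hb : 0 < b) (hc : 0 < c) :
    |Hf d α (a, b, c)| ≤ 8 * (∑ i, α i ^ 3) *
      Real.exp (-(∑ i, α i ^ 2) / 2 * Real.log (1 + (a ^ 2 + b ^ 2 + c ^ 2))) := by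
  have hs : 0 ≤ a ^ 2 + b ^ 2 + c ^ 2 := by positivity
  have hp : 0 < a * b * c := by positivity
  have h1 := Mf_le hα hs (p := a * b * c)
  have h0 := Mf_pos d α (a ^ 2 + b ^ 2 + c ^ 2) (a * b * c)
  have h2 := Tf_le hα hs hp.le
  have h3 := Tf_nonneg hα hp.le (s := a ^ 2 + b ^ 2 + c ^ 2)
  simp only [Hf]
  rw [abs_div, abs_mul, abs_of_pos hp, div_le_iff₀ hp, abs_of_pos (by positivity)]
  have h4 : |Real.sin (Tf d α (a ^ 2 + b ^ 2 + c ^ 2) (a * b * c))| ≤ (∑ i, α i ^ 3) * (a * b * c) :=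
    (Real.abs_sin_le_abs).trans (by rwa [abs_of_nonneg h3])
  have := mul_le_mul h1 h4 (abs_nonneg _) (by positivity)
  linarith

/-- product weight -/
def wt (x : ℝ) : ℝ := (1 + x ^ 2)⁻¹

lemma exp_le_wt {n : ℝ} (hn : 12 ≤ n) (a b c : ℝ) :
    Real.exp (-n / 4 * Real.log (1 + (a ^ 2 + b ^ 2 + c ^ 2))) ≤ wt a * (wt b * wt c) := by
  set s := a ^ 2 + b ^ 2 + c ^ 2 with hs
  have hs0 : 0 ≤ s := by positivity
  have hl : 0 ≤ Real.log (1 + s) := Real.log_nonneg (by linarith)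
  have h1 : Real.exp (-n / 4 * Real.log (1 + s)) ≤ Real.exp (-(3 * Real.log (1 + s))) :=
    Real.exp_le_exp.2 (by nlinarith)
  refine h1.trans ?_
  rw [Real.exp_neg, wt, wt, wt, ← mul_inv, ← mul_inv]
  have h3 : Real.exp (3 * Real.log (1 + s)) = (1 + s) ^ 3 := by
    rw [show (3 : ℝ) * Real.log (1 + s) = Real.log (1 + s) * (3 : ℕ) by push_cast; ring,
      Real.exp_mul, Real.exp_log (by linarith), Real.rpow_natCast]
  rw [h3]
  apply inv_anti₀ (by positivity)
  have ha : 1 + a ^ 2 ≤ 1 + s := by rw [hs]; nlinarith [sq_nonneg b, sq_nonneg c]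
  have hb : 1 + b ^ 2 ≤ 1 + s := by rw [hs]; nlinarith [sq_nonneg a, sq_nonneg c]
  have hc : 1 + c ^ 2 ≤ 1 + s := by rw [hs]; nlinarith [sq_nonneg b, sq_nonneg a]
  calc (1 + a ^ 2) * ((1 + b ^ 2) * (1 + c ^ 2)) ≤ (1 + s) * ((1 + s) * (1 + s)) := by gcongr
    _ = _ := by ring

lemma abs_Hf_le_wt {d : ℕ} {α : Fin d → ℝ} (hα : ∀ i, α i ∈ Set.Icc (0 : ℝ) 1) {a b c : ℝ}
    (ha : 0 < a) (hb : 0 < b) (hc : 0 < c) (hn : 12 ≤ ∑ i, α i ^ 2) :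
    |Hf d α (a, b, c)| ≤ 8 * (∑ i, α i ^ 3) * (wt a * (wt b * wt c)) := by
  have h3 : 0 ≤ ∑ i, α i ^ 3 := Finset.sum_nonneg fun i _ => pow_nonneg (hα i).1 3
  refine (abs_Hf_le hα ha hb hc).trans ?_
  gcongr
  refine le_trans ?_ (exp_le_wt hn a b c)
  apply Real.exp_le_exp.2
  have : 0 ≤ Real.log (1 + (a ^ 2 + b ^ 2 + c ^ 2)) :=
    Real.log_nonneg (by nlinarith [sq_nonneg a, sq_nonneg b, sq_nonneg c])
  nlinarith

/-- lower bound outside the good region -/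
lemma Hf_bad {d : ℕ} {α : Fin d → ℝ} (hα : ∀ i, α i ∈ Set.Icc (0 : ℝ) 1) {a b c : ℝ}
    (ha : 0 < a) (hb : 0 < b) (hc : 0 < c) (hn : 12 ≤ ∑ i, α i ^ 2)
    (hbad : 1 < (∑ i, α i ^ 2) * (a * b * c)) :
    |Hf d α (a, b, c)| ≤ 8 * (∑ i, α i ^ 3) *
      Real.exp (-(1 / 8) * (∑ i, α i ^ 2) ^ (1 / 3 : ℝ)) * (wt a * (wt b * wt c)) := by
  have h3 : 0 ≤ ∑ i, α i ^ 3 := Finset.sum_nonneg fun i _ => pow_nonneg (hα i).1 3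
  refine (abs_Hf_le hα ha hb hc).trans ?_
  rw [mul_assoc _ (Real.exp _)]
  gcongr
  set n := ∑ i, α i ^ 2
  set s := a ^ 2 + b ^ 2 + c ^ 2 with hs
  have h1 : Real.exp (-n / 2 * Real.log (1 + s)) = Real.exp (-n / 4 * Real.log (1 + s)) *
      Real.exp (-n / 4 * Real.log (1 + s)) := by rw [← Real.exp_add]; ring_nf
  rw [h1]
  refine mul_le_mul ?_ (exp_le_wt hn a b c) (by positivity) (by positivity)
  apply Real.exp_le_exp.2
  have hn0 : 0 < n := by linarith
  set u := n ^ (1 / 3 : ℝ) with hu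
  have hu0 : 0 < u := by positivity
  have hu3 : u ^ 3 = n := by
    rw [hu, ← Real.rpow_natCast, ← Real.rpow_mul hn0.le]; norm_num
  have hu1 : 1 ≤ u := by
    by_contra h
    push Not at h
    have : u ^ 3 < 1 := pow_lt_one₀ hu0.le h (by norm_num)
    linarith
  -- s u² ≥ 1
  have hsu : 1 ≤ s * u ^ 2 := by
    by_contra h
    push Not at h
    have hs0 : 0 < s := by positivity
    have e1 : (s * u ^ 2) ^ 3 < 1 := pow_lt_one₀ (by positivity) h (by norm_num)
    have e2 : (a * b * c) ^ 2 ≤ s ^ 3 := by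
      have ha2 : a ^ 2 ≤ s := by rw [hs]; nlinarith [sq_nonneg b, sq_nonneg c]
      have hb2 : b ^ 2 ≤ s := by rw [hs]; nlinarith [sq_nonneg a, sq_nonneg c]
      have hc2 : c ^ 2 ≤ s := by rw [hs]; nlinarith [sq_nonneg b, sq_nonneg a]
      calc (a * b * c) ^ 2 = a ^ 2 * b ^ 2 * c ^ 2 := by ring
        _ ≤ s * s * s := by gcongr
        _ = s ^ 3 := by ring
    have e3 : 1 < (n * (a * b * c)) ^ 2 := one_lt_pow₀ hbad (by norm_num)
    have e4 : (n * (a * b * c)) ^ 2 ≤ (s * u ^ 2) ^ 3 := by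
      calc (n * (a * b * c)) ^ 2 = n ^ 2 * (a * b * c) ^ 2 := by ring
        _ ≤ n ^ 2 * s ^ 3 := by gcongr
        _ = (s * u ^ 2) ^ 3 := by rw [← hu3]; ring
    linarith
  have hlog : 1 / (2 * u ^ 2) ≤ Real.log (1 + s) := by
    have hs1 : 1 / u ^ 2 ≤ s := by rw [div_le_iff₀ (by positivity)]; exact hsu
    have f1 : Real.log (1 + 1 / u ^ 2) ≤ Real.log (1 + s) :=
      Real.log_le_log (by positivity) (by linarith)
    refine le_trans ?_ f1
    have f2 := Real.one_sub_inv_le_log_of_pos (x := 1 + 1 / u ^ 2) (by positivity)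
    refine le_trans ?_ f2
    have : 1 - (1 + 1 / u ^ 2)⁻¹ = 1 / (u ^ 2 + 1) := by field_simp; ring
    rw [this]
    apply one_div_le_one_div_of_le (by positivity)
    nlinarith
  have : n / 4 * (1 / (2 * u ^ 2)) ≤ n / 4 * Real.log (1 + s) := by gcongr
  have e : n / 4 * (1 / (2 * u ^ 2)) = u / 8 := by rw [← hu3]; field_simp; ring
  linarith

lemma S3_le_S2 {d : ℕ} {α : Fin d → ℝ} (hα : ∀ i, α i ∈ Set.Icc (0 : ℝ) 1) :
    ∑ i, α i ^ 3 ≤ ∑ i, α i ^ 2 :=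
  Finset.sum_le_sum fun i _ => pow_le_pow_of_le_one (hα i).1 (hα i).2 (by norm_num)

lemma Hf_good {d : ℕ} {α : Fin d → ℝ} (hα : ∀ i, α i ∈ Set.Icc (0 : ℝ) 1) {a b c : ℝ}
    (ha : 0 < a) (hb : 0 < b) (hc : 0 < c)
    (hgood : (∑ i, α i ^ 2) * (a * b * c) ≤ 1) : 0 ≤ Hf d α (a, b, c) := by
  have hs : 0 ≤ a ^ 2 + b ^ 2 + c ^ 2 := by positivity
  have hp : 0 < a * b * c := by positivity
  have h0 := Mf_pos d α (a ^ 2 + b ^ 2 + c ^ 2) (a * b * c)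
  have h2 := Tf_le hα hs hp.le
  have h3 := Tf_nonneg hα hp.le (s := a ^ 2 + b ^ 2 + c ^ 2)
  have h4 := mul_le_mul_of_nonneg_right (S3_le_S2 hα) hp.le
  have h5 : 0 ≤ Real.sin (Tf d α (a ^ 2 + b ^ 2 + c ^ 2) (a * b * c)) :=
    Real.sin_nonneg_of_nonneg_of_le_pi h3 (by linarith [pi_gt_three])
  simp only [Hf]
  positivity

lemma Hf_cube {d : ℕ} {α : Fin d → ℝ} (hα : ∀ i, α i ∈ Set.Icc (0 : ℝ) 1) {a b c t : ℝ}
    (ha : 0 < a) (hb : 0 < b) (hc : 0 < c) (hat : a ≤ t) (hbt : b ≤ t) (hct : c ≤ t)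
    (ht : t ≤ 1 / 10) (hnt : (∑ i, α i ^ 2) * t ^ 2 = 1) :
    (∑ i, α i ^ 3) * (1 / 4) ≤ Hf d α (a, b, c) := by
  have hs : 0 ≤ a ^ 2 + b ^ 2 + c ^ 2 := by positivity
  have hp : 0 < a * b * c := by positivity
  have ht0 : 0 < t := by linarith
  have S2n : 0 ≤ ∑ i, α i ^ 2 := Finset.sum_nonneg fun i _ => sq_nonneg _
  have S3n : 0 ≤ ∑ i, α i ^ 3 := Finset.sum_nonneg fun i _ => pow_nonneg (hα i).1 3
  have hst : a ^ 2 + b ^ 2 + c ^ 2 ≤ 3 * t ^ 2 := by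
    have : a ^ 2 ≤ t ^ 2 := by gcongr
    have : b ^ 2 ≤ t ^ 2 := by gcongr
    have : c ^ 2 ≤ t ^ 2 := by gcongr
    linarith
  have hpt : a * b * c ≤ t ^ 3 := by
    calc a * b * c ≤ t * t * t := by gcongr
      _ = t ^ 3 := by ring
  have ht3 : t ^ 3 ≤ t ^ 2 / 10 := by nlinarith [sq_nonneg t]
  have ht2 : t ^ 2 ≤ 1 / 100 := by nlinarith
  have h1 := le_Mf hα hs hp.le
  have h2 := Tf_le hα hs hp.le
  have h3 := le_Tf hα hs hp.le (by linarith)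
  have h4 := Tf_nonneg hα hp.le (s := a ^ 2 + b ^ 2 + c ^ 2)
  have h5 : (∑ i, α i ^ 2) * (a ^ 2 + b ^ 2 + c ^ 2 + 2 * (a * b * c)) ≤ 4 := by
    calc _ ≤ (∑ i, α i ^ 2) * (4 * t ^ 2) := by gcongr; linarith
      _ = 4 := by linarith
  have h6 : (1 / 8 : ℝ) ≤ Mf d α (a ^ 2 + b ^ 2 + c ^ 2) (a * b * c) := by
    refine le_trans ?_ ((Real.exp_le_exp.2 (show (-2 : ℝ) ≤ _ by linarith)).trans h1)
    rw [Real.exp_neg, one_div]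
    apply inv_anti₀ (Real.exp_pos _)
    have := Real.exp_one_lt_d9
    rw [show (2 : ℝ) = 1 + 1 by norm_num, Real.exp_add]
    have h0 := Real.exp_pos 1
    nlinarith
  have h7 : (∑ i, α i ^ 3) * (a * b * c) ≤ 1 := by
    calc _ ≤ (∑ i, α i ^ 2) * t ^ 2 := by
          have := S3_le_S2 hα
          gcongr
          linarith [sq_nonneg t]
      _ = 1 := hnt
  set T := Tf d α (a ^ 2 + b ^ 2 + c ^ 2) (a * b * c)
  set M := Mf d α (a ^ 2 + b ^ 2 + c ^ 2) (a * b * c)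
  have h8 : T / 2 ≤ Real.sin T := by
    have := Real.mul_le_sin h4 (by linarith [pi_gt_three])
    refine le_trans ?_ this
    have : (1 / 2 : ℝ) ≤ 2 / π := by
      rw [div_le_div_iff₀ (by norm_num) pi_pos]; linarith [pi_le_four]
    nlinarith
  simp only [Hf]
  rw [le_div_iff₀ hp]
  have h9 : (∑ i, α i ^ 3) * (a * b * c) / 4 ≤ Real.sin T := by linarith
  have h10 : 0 ≤ (∑ i, α i ^ 3) * (a * b * c) := by positivity
  calc _ = 8 * (1 / 8) * ((∑ i, α i ^ 3) * (a * b * c) / 4) := by ring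
    _ ≤ _ := by
      apply mul_le_mul _ h9 (by linarith) (by linarith)
      linarith

lemma Hf_measurable (d : ℕ) (α : Fin d → ℝ) : Measurable (Hf d α) := by
  have hz : ∀ i, Measurable fun v : ℝ × ℝ × ℝ =>
      zf (α i) (v.1 ^ 2 + v.2.1 ^ 2 + v.2.2 ^ 2) (v.1 * v.2.1 * v.2.2) := by
    intro i
    have : (fun v : ℝ × ℝ × ℝ =>
      zf (α i) (v.1 ^ 2 + v.2.1 ^ 2 + v.2.2 ^ 2) (v.1 * v.2.1 * v.2.2)) = fun v =>
        ((1 + (α i) ^ 2 * (v.1 ^ 2 + v.2.1 ^ 2 + v.2.2 ^ 2) : ℝ) : ℂ) +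
        ((2 * (α i) ^ 3 * (v.1 * v.2.1 * v.2.2) : ℝ) : ℂ) * Complex.I := by
      funext v
      apply Complex.ext <;> simp only [zf, Complex.add_re, Complex.add_im, Complex.re_ofReal_mul,
        Complex.im_ofReal_mul, Complex.ofReal_re, Complex.ofReal_im, Complex.I_re, Complex.I_im] <;>
        ring
    rw [this]
    exact Continuous.measurable (by fun_prop)
  have hM : Measurable fun v : ℝ × ℝ × ℝ =>
      Mf d α (v.1 ^ 2 + v.2.1 ^ 2 + v.2.2 ^ 2) (v.1 * v.2.1 * v.2.2) := by
    unfold Mf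
    exact Real.measurable_exp.comp ((Finset.measurable_sum _ fun i _ =>
      Real.measurable_log.comp (hz i).norm).const_mul _)
  have hT : Measurable fun v : ℝ × ℝ × ℝ =>
      Tf d α (v.1 ^ 2 + v.2.1 ^ 2 + v.2.2 ^ 2) (v.1 * v.2.1 * v.2.2) := by
    unfold Tf
    exact (Finset.measurable_sum _ fun i _ => Complex.measurable_arg.comp (hz i)).const_mul _
  unfold Hf
  exact ((hM.const_mul 8).mul (Real.measurable_sin.comp hT)).div
    (Continuous.measurable (by fun_prop))

/-- Lebesgue measure on the positive half-line. -/
def mu0 : Measure ℝ := volume.restrict (Set.Ioi 0)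

instance : SFinite mu0 := by unfold mu0; infer_instance

lemma mu0_prod : mu0.prod (mu0.prod mu0) =
    (volume : Measure (ℝ × ℝ × ℝ)).restrict (Set.Ioi 0 ×ˢ (Set.Ioi 0 ×ˢ Set.Ioi 0)) := by
  unfold mu0
  rw [Measure.prod_restrict, Measure.prod_restrict]
  rfl

lemma ae_mu0 {P : ℝ × ℝ × ℝ → Prop} (h : ∀ a b c : ℝ, 0 < a → 0 < b → 0 < c → P (a, b, c)) :
    ∀ᵐ v ∂(mu0.prod (mu0.prod mu0)), P v := by
  rw [mu0_prod]
  refine ae_restrict_of_forall_mem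
    (measurableSet_Ioi.prod (measurableSet_Ioi.prod measurableSet_Ioi)) ?_
  rintro ⟨a, b, c⟩ ⟨ha, hb, hc⟩
  exact h a b c ha hb hc

lemma wt_integrable : Integrable wt mu0 := by
  unfold mu0
  exact integrable_inv_one_add_sq.restrict

lemma wt_integral : ∫ x, wt x ∂mu0 = π / 2 := by
  simp [mu0, wt]

def cut (t x : ℝ) : ℝ := (Set.Ioc 0 t).indicator (fun _ => (1 : ℝ)) x

lemma cut_integrable (t : ℝ) : Integrable (cut t) mu0 := by
  unfold mu0 cut
  apply Integrable.restrict
  rw [integrable_indicator_iff measurableSet_Ioc]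
  exact integrableOn_const (by simp)

lemma cut_integral {t : ℝ} (ht : 0 ≤ t) : ∫ x, cut t x ∂mu0 = t := by
  unfold mu0 cut
  rw [setIntegral_indicator measurableSet_Ioc]
  have : Set.Ioi (0 : ℝ) ∩ Set.Ioc 0 t = Set.Ioc 0 t := by
    ext x; simp
  rw [this]
  simp [ht]

lemma Hf_integrable {d : ℕ} {α : Fin d → ℝ} (hα : ∀ i, α i ∈ Set.Icc (0 : ℝ) 1)
    (hn : 12 ≤ ∑ i, α i ^ 2) : Integrable (Hf d α) (mu0.prod (mu0.prod mu0)) := by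
  refine Integrable.mono' (g := fun v => 8 * (∑ i, α i ^ 3) * (wt v.1 * (wt v.2.1 * wt v.2.2)))
    ((wt_integrable.mul_prod (wt_integrable.mul_prod wt_integrable)).const_mul _)
    (Hf_measurable d α).aestronglyMeasurable ?_
  exact ae_mu0 fun a b c ha hb hc => abs_Hf_le_wt hα ha hb hc hn

lemma Hf_lower {d : ℕ} {α : Fin d → ℝ} (hα : ∀ i, α i ∈ Set.Icc (0 : ℝ) 1)
    (hn : 12 ≤ ∑ i, α i ^ 2) {t : ℝ} (ht0 : 0 < t)
    (ht : t ≤ 1 / 10) (hnt : (∑ i, α i ^ 2) * t ^ 2 = 1) {a b c : ℝ}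
    (ha : 0 < a) (hb : 0 < b) (hc : 0 < c) :
    (∑ i, α i ^ 3) * (1 / 4) * (cut t a * (cut t b * cut t c)) -
      8 * (∑ i, α i ^ 3) *
      Real.exp (-(1 / 8) * (∑ i, α i ^ 2) ^ (1 / 3 : ℝ)) * (wt a * (wt b * wt c))
      ≤ Hf d α (a, b, c) := by
  have S3n : 0 ≤ ∑ i, α i ^ 3 := Finset.sum_nonneg fun i _ => pow_nonneg (hα i).1 3
  have hw : 0 ≤ 8 * (∑ i, α i ^ 3) *
      Real.exp (-(1 / 8) * (∑ i, α i ^ 2) ^ (1 / 3 : ℝ)) * (wt a * (wt b * wt c)) := by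
    unfold wt; positivity
  by_cases hcube : a ≤ t ∧ b ≤ t ∧ c ≤ t
  · obtain ⟨h1, h2, h3⟩ := hcube
    have := Hf_cube hα ha hb hc h1 h2 h3 ht hnt
    have e : cut t a * (cut t b * cut t c) = 1 := by
      simp [cut, Set.indicator, ha, hb, hc, h1, h2, h3]
    rw [e]
    linarith
  · have e : cut t a * (cut t b * cut t c) = 0 := by
      simp only [cut, Set.indicator, Set.mem_Ioc, ha, hb, hc, true_and]
      by_cases h1 : a ≤ t <;> by_cases h2 : b ≤ t <;> by_cases h3 : c ≤ t <;> simp_all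
    rw [e]
    by_cases hg : (∑ i, α i ^ 2) * (a * b * c) ≤ 1
    · have := Hf_good hα ha hb hc hg
      linarith
    · push Not at hg
      have := (abs_le.1 (Hf_bad hα ha hb hc hn hg)).1
      linarith

lemma Hf_integral {d : ℕ} {α : Fin d → ℝ} (hα : ∀ i, α i ∈ Set.Icc (0 : ℝ) 1)
    (hn : 12 ≤ ∑ i, α i ^ 2) {t : ℝ} (ht0 : 0 < t)
    (ht : t ≤ 1 / 10) (hnt : (∑ i, α i ^ 2) * t ^ 2 = 1) :
    (∑ i, α i ^ 3) * (1 / 4) * t ^ 3 -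
      8 * (∑ i, α i ^ 3) *
      Real.exp (-(1 / 8) * (∑ i, α i ^ 2) ^ (1 / 3 : ℝ)) * (π / 2) ^ 3
      ≤ ∫ v, Hf d α v ∂(mu0.prod (mu0.prod mu0)) := by
  have i1 : Integrable (fun v : ℝ × ℝ × ℝ => (∑ i, α i ^ 3) * (1 / 4) *
      (cut t v.1 * (cut t v.2.1 * cut t v.2.2))) (mu0.prod (mu0.prod mu0)) :=
    ((cut_integrable t).mul_prod ((cut_integrable t).mul_prod (cut_integrable t))).const_mul _
  have i2 : Integrable (fun v : ℝ × ℝ × ℝ => 8 * (∑ i, α i ^ 3) *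
      Real.exp (-(1 / 8) * (∑ i, α i ^ 2) ^ (1 / 3 : ℝ)) *
      (wt v.1 * (wt v.2.1 * wt v.2.2))) (mu0.prod (mu0.prod mu0)) :=
    (wt_integrable.mul_prod (wt_integrable.mul_prod wt_integrable)).const_mul _
  have key := integral_mono_ae (i1.sub i2) (Hf_integrable hα hn)
    (ae_mu0 fun a b c ha hb hc => Hf_lower hα hn ht0 ht hnt ha hb hc)
  refine le_trans (le_of_eq ?_) key
  have e1 : ∫ v : ℝ × ℝ × ℝ, cut t v.1 * (cut t v.2.1 * cut t v.2.2) ∂(mu0.prod (mu0.prod mu0))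
      = t ^ 3 := by
    rw [integral_prod_mul (cut t) (fun w : ℝ × ℝ => cut t w.1 * cut t w.2),
      integral_prod_mul, cut_integral ht0.le]
    ring
  have e2 : ∫ v : ℝ × ℝ × ℝ, wt v.1 * (wt v.2.1 * wt v.2.2) ∂(mu0.prod (mu0.prod mu0))
      = (π / 2) ^ 3 := by
    rw [integral_prod_mul wt (fun w : ℝ × ℝ => wt w.1 * wt w.2),
      integral_prod_mul, wt_integral]
    ring
  simp only [Pi.sub_apply]
  rw [integral_sub i1 i2, integral_const_mul, integral_const_mul, e1, e2]

lemma pv3_congr (g : ℝ → ℝ → ℝ → ℂ) (H : ℝ → ℝ → ℝ → ℝ)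
    (h : ∀ a b c : ℝ, 0 < a → 0 < b → 0 < c →
      g a b c + g (-a) b c + g a (-b) c + g a b (-c)
      + g (-a) (-b) c + g (-a) b (-c) + g a (-b) (-c) + g (-a) (-b) (-c) = ((H a b c : ℝ) : ℂ)) :
    pv3 g = ((∫ a, ∫ b, ∫ c, H a b c ∂mu0 ∂mu0 ∂mu0 : ℝ) : ℂ) := by
  rw [pv3, mu0, ← integral_complex_ofReal]
  refine setIntegral_congr_fun measurableSet_Ioi fun a ha => ?_
  rw [← integral_complex_ofReal]
  refine setIntegral_congr_fun measurableSet_Ioi fun b hb => ?_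
  rw [← integral_complex_ofReal]
  refine setIntegral_congr_fun measurableSet_Ioi fun c hc => ?_
  exact h a b c ha hb hc

lemma Hf_fubini {d : ℕ} {α : Fin d → ℝ} (hI : Integrable (Hf d α) (mu0.prod (mu0.prod mu0))) :
    ∫ v, Hf d α v ∂(mu0.prod (mu0.prod mu0)) =
      ∫ a, ∫ b, ∫ c, Hf d α (a, b, c) ∂mu0 ∂mu0 ∂mu0 := by
  rw [integral_prod _ hI]
  refine integral_congr_ae ?_
  filter_upwards [hI.prod_right_ae] with a ha
  rw [integral_prod _ ha]

lemma pv3_eq {d : ℕ} {α : Fin d → ℝ} (hα : ∀ i, α i ∈ Set.Icc (0 : ℝ) 1)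
    (hn : 12 ≤ ∑ i, α i ^ 2) :
    pv3 (fun a b c => Complex.I / ((a : ℂ) * (b : ℂ) * (c : ℂ)) * wishChar d α a b c) =
      ((∫ v, Hf d α v ∂(mu0.prod (mu0.prod mu0)) : ℝ) : ℂ) := by
  rw [Hf_fubini (Hf_integrable hα hn)]
  generalize hg : (fun a b c : ℝ =>
    Complex.I / ((a : ℂ) * (b : ℂ) * (c : ℂ)) * wishChar d α a b c) = g
  exact pv3_congr g (fun a b c => Hf d α (a, b, c))
    fun a b c ha hb hc => integrand_eq d α ha hb hc g hg.symm

lemma eventually_small : ∀ᶠ n : ℝ in atTop,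
    512 * Real.exp (-(1 / 8) * n ^ (1 / 3 : ℝ)) ≤ ((Real.sqrt n)⁻¹) ^ 3 := by
  have h := (tendsto_rpow_mul_exp_neg_mul_atTop_nhds_zero (9 / 2) (1 / 8) (by norm_num)).comp
    (tendsto_rpow_atTop (show (0 : ℝ) < 1 / 3 by norm_num))
  have h2 := h.eventually (gt_mem_nhds (show (0 : ℝ) < 1 / 512 by norm_num))
  filter_upwards [h2, eventually_gt_atTop 0] with n hn hn0
  simp only [Function.comp] at hn
  have e : (n ^ (1 / 3 : ℝ)) ^ (9 / 2 : ℝ) = (Real.sqrt n) ^ 3 := by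
    rw [← Real.rpow_mul hn0.le, Real.sqrt_eq_rpow, ← Real.rpow_natCast, ← Real.rpow_mul hn0.le]
    norm_num
  rw [e] at hn
  have hs : 0 < Real.sqrt n ^ 3 := by positivity
  rw [inv_pow, ← one_div, le_div_iff₀ hs]
  linarith

/-- Lemma 3. There is `c_{1/2} > 0` such that for `α` with entries in
`[0,1]`, some entry equal to `1`, and `‖α‖₂² > c_{1/2}`, the principal value
`PV ∫ (i/(abc)) ∏_i (1 + α_i²(a²+b²+c²) + 2α_i³abc·i)^{-1/2}` is real and at least
`(1/8)(‖α‖₃/‖α‖₂)³`. -/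
theorem pv_integral_lower_bound :
    ∃ c > (0 : ℝ), ∀ (d : ℕ) (α : Fin d → ℝ),
      (∀ i, α i ∈ Set.Icc (0 : ℝ) 1) → (∃ i, α i = 1) →
      nrm 2 α ^ 2 > c →
      (pv3 (fun a b c =>
          Complex.I / ((a : ℂ) * (b : ℂ) * (c : ℂ)) * wishChar d α a b c)).im = 0 ∧
      (1 / 8) * (nrm 3 α / nrm 2 α) ^ 3
        ≤ (pv3 (fun a b c =>
            Complex.I / ((a : ℂ) * (b : ℂ) * (c : ℂ)) * wishChar d α a b c)).re := by
  obtain ⟨N, hN⟩ := eventually_atTop.1 eventually_small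
  refine ⟨max N 100, by positivity, fun d α hα _ hc => ?_⟩
  have S2n : 0 ≤ ∑ i, α i ^ 2 := Finset.sum_nonneg fun i _ => sq_nonneg _
  have S3n : 0 ≤ ∑ i, α i ^ 3 := Finset.sum_nonneg fun i _ => pow_nonneg (hα i).1 3
  have e2 : nrm 2 α = Real.sqrt (∑ i, α i ^ 2) := by
    rw [nrm, Real.sqrt_eq_rpow]; norm_num
  have e3 : nrm 3 α ^ 3 = ∑ i, α i ^ 3 := by
    rw [nrm, ← Real.rpow_natCast, ← Real.rpow_mul S3n]; norm_num
  rw [e2, Real.sq_sqrt S2n] at hc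
  have hcN : N < ∑ i, α i ^ 2 := lt_of_le_of_lt (le_max_left _ _) hc
  have hc100 : 100 < ∑ i, α i ^ 2 := lt_of_le_of_lt (le_max_right _ _) hc
  have hsm := hN _ hcN.le
  have hn : 12 ≤ ∑ i, α i ^ 2 := by linarith
  rw [pv3_eq hα hn, div_pow, e3, e2]
  refine ⟨Complex.ofReal_im _, ?_⟩
  rw [Complex.ofReal_re]
  set t := (Real.sqrt (∑ i, α i ^ 2))⁻¹ with ht
  have hsq : 10 ≤ Real.sqrt (∑ i, α i ^ 2) := Real.le_sqrt_of_sq_le (by linarith)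
  have ht0 : 0 < t := by positivity
  have ht1 : t ≤ 1 / 10 := by
    rw [ht, one_div]; exact inv_anti₀ (by norm_num) hsq
  have hnt : (∑ i, α i ^ 2) * t ^ 2 = 1 := by
    rw [ht, inv_pow, Real.sq_sqrt S2n, mul_inv_cancel₀ (by linarith)]
  have key := Hf_integral hα hn ht0 ht1 hnt
  refine le_trans ?_ key
  have hpi : (π / 2) ^ 3 ≤ 8 := by
    have : π / 2 ≤ 2 := by linarith [pi_le_four]
    calc (π / 2) ^ 3 ≤ 2 ^ 3 := by gcongr
      _ = 8 := by norm_num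
  rw [div_eq_mul_inv (∑ i, α i ^ 3), ← inv_pow, ← ht]
  set δ := Real.exp (-(1 / 8) * (∑ i, α i ^ 2) ^ (1 / 3 : ℝ))
  have hδ : 0 < δ := Real.exp_pos _
  have h1 : 8 * (∑ i, α i ^ 3) * δ * (π / 2) ^ 3 ≤ (∑ i, α i ^ 3) * (t ^ 3 / 8) := by
    calc _ ≤ 8 * (∑ i, α i ^ 3) * δ * 8 := by gcongr
      _ = (∑ i, α i ^ 3) * (64 * δ) := by ring
      _ ≤ _ := by gcongr; linarith
  linarith

end
end

section
/- Let p ∈ (0,1) and let Φ be the cumulative distribution function of the standard Gaussian. Let α ∈ ℝ^d have entries in [0,1] with at least one entry equal to 1, let X₁, X₂ be i.i.d. N(0,D_α), and let t_{p,α} satisfy P(⟨X₁,X₂⟩ ≥ t_{p,α}) = p. Then: (i) with t_p = Φ^{−1}(p), one has ‖α‖₂·t_p − k_p ≤ t_{p,α} ≤ ‖α‖₂·t_p + k_p for a constant k_p depending only on p; and (ii) with p' := Φ^{−1}(t_{p,α}/‖α‖₂), one has |p − p'| ≤ 3·(‖α‖₃/‖α‖₂)³. -/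
open MeasureTheory ProbabilityTheory Real Filter
open scoped Classical ENNReal NNReal

noncomputable section

def QQ (u : ℝ) : ℝ := (gaussianReal 0 1).real (Set.Ioi u)

lemma pdf01 (u : ℝ) : gaussianPDFReal 0 1 u = (√(2 * π))⁻¹ * rexp (-u ^ 2 / 2) := by
  simp [gaussianPDFReal]

lemma cont_pdf01 : Continuous (gaussianPDFReal 0 1) := by
  have : gaussianPDFReal 0 1 = fun u => (√(2 * π))⁻¹ * rexp (-u ^ 2 / 2) := funext pdf01
  rw [this]; fun_prop

lemma QQ_eq (u : ℝ) : QQ u = ∫ x in Set.Ioi u, gaussianPDFReal 0 1 x := by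
  rw [QQ, Measure.real, gaussianReal_apply_eq_integral _ (by simp), ENNReal.toReal_ofReal]
  exact integral_nonneg fun x => gaussianPDFReal_nonneg _ _ _

lemma QQ_sub (a b : ℝ) : QQ a - QQ b = ∫ x in a..b, gaussianPDFReal 0 1 x := by
  rw [QQ_eq, QQ_eq]
  have := (integrable_gaussianPDFReal 0 1)
  exact intervalIntegral.integral_Ioi_sub_Ioi' this.integrableOn this.integrableOn

lemma QQ_deriv (u : ℝ) : HasDerivAt QQ (-gaussianPDFReal 0 1 u) u := by
  have h : QQ = fun u => QQ 0 - ∫ x in (0:ℝ)..u, gaussianPDFReal 0 1 x := by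
    ext u; rw [← QQ_sub]; ring
  rw [h]
  have := intervalIntegral.integral_hasDerivAt_right (a := (0:ℝ)) (b := u)
    (f := gaussianPDFReal 0 1) (cont_pdf01.intervalIntegrable _ _)
    (cont_pdf01.stronglyMeasurableAtFilter _ _) cont_pdf01.continuousAt
  simpa using this.const_sub (QQ 0)

lemma QQ_neg (u : ℝ) : QQ (-u) = 1 - QQ u := by
  have h : (gaussianReal 0 1).map (fun x : ℝ ↦ -x) = gaussianReal 0 1 := by
    rw [gaussianReal_map_neg]; simp
  have e1 : QQ (-u) = (gaussianReal 0 1).real (Set.Iio u) := by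
    rw [QQ, ← h, map_measureReal_apply (by fun_prop) measurableSet_Ioi, h]
    congr 1; ext x; simp
  have e2 : (gaussianReal 0 1).real (Set.Iio u) = (gaussianReal 0 1).real (Set.Iic u) := by
    have := nullSingletonClass_gaussianReal (μ := 0) (v := 1) (by simp)
    exact measureReal_congr Iio_ae_eq_Iic
  rw [e1, e2, QQ, ← Set.compl_Iic, measureReal_compl measurableSet_Iic]
  simp

lemma QQ_zero : QQ 0 = 1 / 2 := by
  have := QQ_neg 0
  simp at this; linarith

lemma QQ_Ici (u : ℝ) : (gaussianReal 0 1).real (Set.Ici u) = QQ u := by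
  have := nullSingletonClass_gaussianReal (μ := 0) (v := 1) (by simp)
  exact (measureReal_congr Ioi_ae_eq_Ici).symm

lemma QQ_anti {a b : ℝ} (h : a ≤ b) : QQ b ≤ QQ a :=
  measureReal_mono (Set.Ioi_subset_Ioi h)

lemma QQ_nonneg (a : ℝ) : 0 ≤ QQ a := measureReal_nonneg
lemma QQ_le_one (a : ℝ) : QQ a ≤ 1 := measureReal_le_one

/-- tail probability with variance v -/
def gg (t : ℝ) (v : ℝ≥0) : ℝ := (gaussianReal 0 v).real (Set.Ici t)

lemma gg_eq (t : ℝ) (v : ℝ≥0) (hv : v ≠ 0) : gg t v = QQ (t / √(v:ℝ)) := by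
  have hs : 0 < √(v:ℝ) := Real.sqrt_pos.2 (by positivity)
  have h : (gaussianReal 0 1).map (fun x : ℝ ↦ √(v:ℝ) * x) = gaussianReal 0 v := by
    rw [gaussianReal_map_const_mul]
    congr 1
    · simp
    · ext; simp
  rw [← QQ_Ici, gg, ← h, map_measureReal_apply (by fun_prop) measurableSet_Ici]
  congr 1; ext x
  simp only [Set.mem_preimage, Set.mem_Ici, div_le_iff₀ hs, mul_comm]

lemma gg_nonneg (t : ℝ) (v : ℝ≥0) : 0 ≤ gg t v := measureReal_nonneg
lemma gg_le_one (t : ℝ) (v : ℝ≥0) : gg t v ≤ 1 := measureReal_le_one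

lemma cheb (v : ℝ≥0) {t : ℝ} (ht : 0 < t) :
    (gaussianReal 0 v).real {x | t ≤ |x|} ≤ v / t ^ 2 := by
  have h := meas_ge_le_variance_div_sq (μ := gaussianReal 0 v) (X := id)
    (memLp_id_gaussianReal 2) ht
  simp only [id, integral_id_gaussianReal, sub_zero] at h
  have := ENNReal.toReal_mono (by simp) h
  rw [ENNReal.toReal_ofReal (div_nonneg (variance_nonneg _ _) (sq_nonneg _))] at this
  simpa [Measure.real] using this

lemma gg_cheb_pos (v : ℝ≥0) {t : ℝ} (ht : 0 < t) : gg t v ≤ v / t ^ 2 := by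
  refine le_trans (measureReal_mono ?_) (cheb v ht)
  intro x hx
  exact le_trans hx (le_abs_self x)

lemma gg_cheb_neg (v : ℝ≥0) {t : ℝ} (ht : t < 0) : 1 - gg t v ≤ v / t ^ 2 := by
  have h := cheb v (t := -t) (by linarith)
  rw [neg_sq] at h
  refine le_trans ?_ h
  have : 1 - gg t v = (gaussianReal 0 v).real (Set.Ici t)ᶜ := by
    rw [measureReal_compl measurableSet_Ici]; simp [gg]
  rw [this]
  refine measureReal_mono ?_
  intro x hx
  simp only [Set.mem_compl_iff, Set.mem_Ici, not_le] at hx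
  exact le_trans (by linarith) (neg_le_abs x)

lemma mom2 (v : ℝ≥0) : ∫ x, x ^ 2 ∂(gaussianReal 0 v) = v := by
  have := variance_fun_id_gaussianReal (μ := 0) (v := v)
  rw [variance_eq_integral measurable_id'.aemeasurable] at this
  simpa using this

lemma mom4 (v : ℝ≥0) : ∫ x, x ^ 4 ∂(gaussianReal 0 v) = 3 * v ^ 2 := by
  have h0 : ∫ x, x ^ 4 ∂(gaussianReal 0 v) =
      iteratedDeriv 4 (mgf (fun x ↦ x) (gaussianReal 0 v)) 0 := by
    rw [iteratedDeriv_mgf_zero] <;> simp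
  rw [h0, mgf_fun_id_gaussianReal]
  simp only [zero_mul, zero_add]
  have hd : ∀ t : ℝ, HasDerivAt (fun t : ℝ => rexp (v * t ^ 2 / 2)) (v * t * rexp (v * t ^ 2 / 2)) t := by
    intro t
    have := ((((hasDerivAt_id t).pow 2).const_mul (v:ℝ)).div_const 2).exp
    simp only [id, Pi.pow_apply] at this
    refine this.congr_deriv ?_
    simp; ring
  have e1 : deriv (fun t : ℝ => rexp (v * t ^ 2 / 2)) = fun t => v * t * rexp (v * t ^ 2 / 2) :=
    funext fun t => (hd t).deriv
  have e2 : deriv (fun t : ℝ => v * t * rexp (v * t ^ 2 / 2)) =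
      fun t => (v + v ^ 2 * t ^ 2) * rexp (v * t ^ 2 / 2) := by
    funext t
    refine HasDerivAt.deriv ?_
    have := (((hasDerivAt_id t).const_mul (v:ℝ))).mul (hd t)
    refine this.congr_deriv ?_
    simp; ring
  have e3 : deriv (fun t : ℝ => (v + v ^ 2 * t ^ 2) * rexp (v * t ^ 2 / 2)) =
      fun t => (3 * v ^ 2 * t + v ^ 3 * t ^ 3) * rexp (v * t ^ 2 / 2) := by
    funext t
    refine HasDerivAt.deriv ?_
    have := ((((hasDerivAt_id t).pow 2).const_mul ((v:ℝ)^2)).const_add (v:ℝ)).mul (hd t)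
    refine this.congr_deriv ?_
    simp; ring
  have e4 : deriv (fun t : ℝ => (3 * v ^ 2 * t + v ^ 3 * t ^ 3) * rexp (v * t ^ 2 / 2)) 0 =
      3 * (v:ℝ) ^ 2 := by
    refine HasDerivAt.deriv ?_
    have := (((hasDerivAt_id (0:ℝ)).const_mul (3 * (v:ℝ)^2)).add (((hasDerivAt_id (0:ℝ)).pow 3).const_mul ((v:ℝ)^3))).mul (hd 0)
    refine this.congr_deriv ?_
    simp
  rw [iteratedDeriv_succ, iteratedDeriv_succ, iteratedDeriv_succ, iteratedDeriv_one, e1, e2, e3, e4]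

lemma invsqrt2pi_le : (√(2 * π))⁻¹ ≤ 2 / 5 := by
  have h : (5 / 2 : ℝ) ≤ √(2 * π) := by
    apply Real.le_sqrt_of_sq_le
    nlinarith [Real.pi_gt_d2]
  calc (√(2 * π))⁻¹ ≤ (5 / 2 : ℝ)⁻¹ := inv_anti₀ (by norm_num) h
    _ = 2 / 5 := by norm_num

lemma pdf_le (u : ℝ) : gaussianPDFReal 0 1 u * (1 + u ^ 2 / 2 + u ^ 4 / 8) ≤ 2 / 5 := by
  rw [pdf01]
  have h := Real.quadratic_le_exp_of_nonneg (x := u ^ 2 / 2) (by positivity)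
  have h2 : rexp (-u ^ 2 / 2) * (1 + u ^ 2 / 2 + u ^ 4 / 8) ≤ 1 := by
    have : rexp (-u ^ 2 / 2) * rexp (u ^ 2 / 2) = 1 := by
      rw [← Real.exp_add]; simp; ring
    rw [← this]
    gcongr
    nlinarith
  calc _ = (√(2 * π))⁻¹ * (rexp (-u ^ 2 / 2) * (1 + u ^ 2 / 2 + u ^ 4 / 8)) := by ring
    _ ≤ (2 / 5) * 1 := by
      gcongr
      exact invsqrt2pi_le
    _ = _ := by ring

lemma pdf_b1 (u : ℝ) : |u * gaussianPDFReal 0 1 u| ≤ 1 / 3 := by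
  have h := pdf_le u
  have h0 := gaussianPDFReal_nonneg 0 1 u
  rw [abs_mul, abs_of_nonneg h0]
  have k : |u| ≤ 5 / 6 * (1 + u ^ 2 / 2 + u ^ 4 / 8) := by
    rw [← sq_abs u, show u ^ 4 = |u| ^ 4 by rw [← abs_pow, abs_of_nonneg (by positivity)]]
    nlinarith [sq_nonneg (|u| - 6 / 5), sq_nonneg (|u| ^ 2)]
  nlinarith [mul_le_mul_of_nonneg_right k h0]

lemma pdf_b3 (u : ℝ) : |(u ^ 3 - 3 * u) * gaussianPDFReal 0 1 u| ≤ 4 / 3 := by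
  have h := pdf_le u
  have h0 := gaussianPDFReal_nonneg 0 1 u
  rw [abs_mul, abs_of_nonneg h0]
  have k : |u ^ 3 - 3 * u| ≤ 10 / 3 * (1 + u ^ 2 / 2 + u ^ 4 / 8) := by
    have k1 : |u ^ 3 - 3 * u| ≤ |u| ^ 3 + 3 * |u| := by
      have := abs_sub (u ^ 3) (3 * u)
      rw [abs_pow, abs_mul, abs_of_pos (by norm_num : (0:ℝ) < 3)] at this
      exact this
    refine k1.trans ?_
    rw [← sq_abs u, show u ^ 4 = |u| ^ 4 by rw [← abs_pow, abs_of_nonneg (by positivity)]]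
    nlinarith [sq_nonneg (|u| ^ 2 - 6 / 5 * |u| - 1), sq_nonneg (|u| - 17/10)]
  nlinarith [mul_le_mul_of_nonneg_right k h0]

lemma pdf_deriv (u : ℝ) :
    HasDerivAt (gaussianPDFReal 0 1) (-u * gaussianPDFReal 0 1 u) u := by
  have : gaussianPDFReal 0 1 = fun u => (√(2 * π))⁻¹ * rexp (-u ^ 2 / 2) := funext pdf01
  rw [this]
  have h := (((((hasDerivAt_id u).pow 2).neg).div_const 2).exp).const_mul (√(2 * π))⁻¹
  refine h.congr_deriv ?_
  simp; ring

lemma u_deriv (s : ℝ) {w : ℝ} (hw : 0 < w) :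
    HasDerivAt (fun w => s / √w) (-(s / √w / (2 * w))) w := by
  have h := ((Real.hasDerivAt_sqrt hw.ne').inv (Real.sqrt_pos.2 hw).ne').const_mul s
  have hs := Real.sqrt_pos.2 hw
  refine h.congr_deriv ?_
  have : √w ^ 2 = w := Real.sq_sqrt hw.le
  rw [this]
  field_simp

def G1 (s w : ℝ) : ℝ := (s / √w) * gaussianPDFReal 0 1 (s / √w) / (2 * w)

lemma G_deriv (s : ℝ) {w : ℝ} (hw : 0 < w) :
    HasDerivAt (fun w => QQ (s / √w)) (G1 s w) w := by
  have h := (QQ_deriv (s / √w)).comp w (u_deriv s hw)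
  refine h.congr_deriv ?_
  rw [G1]; ring

lemma G1_deriv (s : ℝ) {w : ℝ} (hw : 0 < w) :
    HasDerivAt (G1 s) (((s / √w) ^ 3 - 3 * (s / √w)) * gaussianPDFReal 0 1 (s / √w) / (4 * w ^ 2)) w := by
  have h := ((u_deriv s hw).mul ((pdf_deriv (s / √w)).comp w (u_deriv s hw))).div
    ((hasDerivAt_id w).const_mul 2) (by simpa using hw.ne')
  refine h.congr_deriv ?_
  simp only [Pi.mul_apply, Function.comp, id]
  generalize s / √w = u
  generalize gaussianPDFReal 0 1 u = f
  simp
  field_simp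
  ring

lemma G1_lip (s : ℝ) {a b : ℝ} (ha : 1 / 3 ≤ a) (hb : 1 / 3 ≤ b) :
    |G1 s b - G1 s a| ≤ 3 * |b - a| := by
  have := Convex.norm_image_sub_le_of_norm_hasDerivWithin_le (s := Set.Ici (1/3 : ℝ)) (f := G1 s)
    (f' := fun w => ((s / √w) ^ 3 - 3 * (s / √w)) * gaussianPDFReal 0 1 (s / √w) / (4 * w ^ 2))
    (C := 3) (x := a) (y := b)
    (fun x hx => (G1_deriv s (lt_of_lt_of_le (by norm_num) hx)).hasDerivWithinAt)
    (fun x hx => ?_) (convex_Ici _) ha hb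
  · simpa [Real.norm_eq_abs] using this
  · have hx' : (1/3 : ℝ) ≤ x := hx
    rw [Real.norm_eq_abs, abs_div, abs_of_pos (by positivity : 0 < 4 * x ^ 2),
      div_le_iff₀ (by positivity)]
    have := pdf_b3 (s / √x)
    nlinarith

lemma taylor_aux (f f' : ℝ → ℝ) (hf : ∀ w, 1 / 3 ≤ w → HasDerivAt f (f' w) w)
    (hl : ∀ w, 1 / 3 ≤ w → |f' w - f' 1| ≤ 3 * |w - 1|) {w : ℝ} (hw : 1 / 3 ≤ w) :
    f w - f 1 - f' 1 * (w - 1) ≤ 3 / 2 * (w - 1) ^ 2 := by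
  set h : ℝ → ℝ := fun w => 3 / 2 * (w - 1) ^ 2 - (f w - f' 1 * (w - 1)) with hh
  have hd : ∀ w, 1 / 3 ≤ w → HasDerivAt h (3 * (w - 1) - (f' w - f' 1)) w := by
    intro w hw
    have := ((((hasDerivAt_id w).sub_const 1).pow 2).const_mul (3 / 2)).sub
      ((hf w hw).sub (((hasDerivAt_id w).sub_const 1).const_mul (f' 1)))
    refine this.congr_deriv ?_
    simp; ring
  have key : h 1 ≤ h w := by
    rcases le_total 1 w with h1 | h1
    · have hm : MonotoneOn h (Set.Ici 1) := by
        refine monotoneOn_of_hasDerivWithinAt_nonneg (convex_Ici 1)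
          (f' := fun w => 3 * (w - 1) - (f' w - f' 1)) ?_ ?_ ?_
        · intro x hx
          have hx : 1 ≤ x := hx
          exact (hd x (by linarith)).continuousAt.continuousWithinAt
        · intro x hx
          have hx : 1 ≤ x := interior_subset hx
          exact (hd x (by linarith)).hasDerivWithinAt
        · intro x hx
          have hx : 1 ≤ x := interior_subset hx
          have := (abs_le.1 (hl x (by linarith))).2
          rw [abs_of_nonneg (by linarith)] at this
          show 0 ≤ 3 * (x - 1) - (f' x - f' 1)
          linarith
      exact hm (Set.mem_Ici.2 le_rfl) h1 h1
    · have hm : AntitoneOn h (Set.Icc (1/3) 1) := by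
        refine antitoneOn_of_hasDerivWithinAt_nonpos (convex_Icc _ _)
          (f' := fun w => 3 * (w - 1) - (f' w - f' 1)) ?_ ?_ ?_
        · intro x hx
          exact (hd x hx.1).continuousAt.continuousWithinAt
        · intro x hx
          have hx := interior_subset hx
          exact (hd x hx.1).hasDerivWithinAt
        · intro x hx
          have hx := interior_subset hx
          have := (abs_le.1 (hl x hx.1)).1
          rw [abs_of_nonpos (by linarith [hx.2])] at this
          show 3 * (x - 1) - (f' x - f' 1) ≤ 0
          linarith
      exact hm ⟨hw, h1⟩ ⟨by norm_num, le_rfl⟩ h1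
  simp only [hh] at key
  nlinarith

lemma taylor_big (s : ℝ) {w : ℝ} (hw : 1 / 3 ≤ w) :
    |QQ (s / √w) - QQ s - G1 s 1 * (w - 1)| ≤ 3 / 2 * (w - 1) ^ 2 := by
  have h1 := taylor_aux (fun w => QQ (s / √w)) (G1 s)
    (fun w hw => G_deriv s (lt_of_lt_of_le (by norm_num) hw))
    (fun w hw => G1_lip s (by norm_num) hw) hw
  have h2 := taylor_aux (fun w => -QQ (s / √w)) (fun w => -G1 s w)
    (fun w hw => (G_deriv s (lt_of_lt_of_le (by norm_num) hw)).neg)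
    (fun w hw => by
      have := G1_lip s (a := 1) (by norm_num) hw
      rw [← abs_neg] at this
      convert this using 2; ring) hw
  simp only [Real.sqrt_one, div_one] at h1 h2
  rw [abs_le]; constructor <;> linarith

lemma gg_half (t : ℝ) (v v0 : ℝ≥0) (hv0 : v0 ≠ 0) : |gg t v - gg t v0| ≤ 1 / 2 := by
  have hs : 0 < √(v0:ℝ) := Real.sqrt_pos.2 (by positivity)
  rw [gg_eq t v0 hv0]
  by_cases hv : v = 0
  · subst hv
    have e : gg t 0 = if t ≤ 0 then 1 else 0 := by
      simp only [gg, gaussianReal_zero_var, Measure.real, Measure.dirac_apply' _ measurableSet_Ici,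
        Set.indicator]
      split_ifs <;> simp_all
    rw [e]
    have a1 := QQ_nonneg (t / √(v0:ℝ))
    have a2 := QQ_le_one (t / √(v0:ℝ))
    split_ifs with h
    · have := QQ_anti (div_nonpos_of_nonpos_of_nonneg h hs.le)
      rw [QQ_zero] at this
      rw [abs_le]; constructor <;> linarith
    · have := QQ_anti (div_nonneg (not_le.1 h).le hs.le)
      rw [QQ_zero] at this
      rw [abs_le]; constructor <;> linarith
  · rw [gg_eq t v hv]
    have hs' : 0 < √(v:ℝ) := Real.sqrt_pos.2 (by positivity)
    have a1 := QQ_nonneg (t / √(v0:ℝ))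
    have a2 := QQ_le_one (t / √(v0:ℝ))
    have b1 := QQ_nonneg (t / √(v:ℝ))
    have b2 := QQ_le_one (t / √(v:ℝ))
    rcases le_total t 0 with h | h
    · have := QQ_anti (div_nonpos_of_nonpos_of_nonneg h hs.le)
      have := QQ_anti (div_nonpos_of_nonpos_of_nonneg h hs'.le)
      rw [QQ_zero] at *
      rw [abs_le]; constructor <;> linarith
    · have := QQ_anti (div_nonneg h hs.le)
      have := QQ_anti (div_nonneg h hs'.le)
      rw [QQ_zero] at *
      rw [abs_le]; constructor <;> linarith

lemma gg_taylor (t : ℝ) (v v0 : ℝ≥0) (hv0 : v0 ≠ 0) :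
    |gg t v - QQ (t / √(v0:ℝ)) - G1 (t / √(v0:ℝ)) 1 * ((v:ℝ) / v0 - 1)|
      ≤ 3 / 2 * ((v:ℝ) / v0 - 1) ^ 2 := by
  have hp : 0 < (v0:ℝ) := by positivity
  rcases le_total (1/3) ((v:ℝ) / v0) with h | h
  · have hvp : 0 < (v:ℝ) := by
      by_contra hc
      have : (v:ℝ) = 0 := le_antisymm (not_lt.1 hc) v.2
      rw [this] at h; norm_num at h
    have := taylor_big (t / √(v0:ℝ)) h
    rw [gg_eq t v (by exact_mod_cast hvp.ne')]
    convert this using 5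
    rw [Real.sqrt_div hvp.le]
    have := Real.sqrt_pos.2 hp
    have := Real.sqrt_pos.2 hvp
    field_simp
  · have h1 := gg_half t v v0 hv0
    rw [gg_eq t v0 hv0] at h1
    set s := t / √(v0:ℝ)
    have h2 : |G1 s 1| ≤ 1 / 6 := by
      have := pdf_b1 s
      simp only [G1, Real.sqrt_one, div_one, mul_one]
      rw [abs_div, abs_of_pos (by norm_num : (0:ℝ) < 2)]; linarith
    have h0 : 0 ≤ (v:ℝ) / v0 := by positivity
    have h3 : |G1 s 1 * ((v:ℝ) / v0 - 1)| ≤ 1 / 6 := by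
      rw [abs_mul]
      have : |(v:ℝ) / v0 - 1| ≤ 1 := by rw [abs_le]; constructor <;> linarith
      nlinarith [abs_nonneg (G1 s 1), abs_nonneg ((v:ℝ) / v0 - 1)]
    calc _ ≤ |gg t v - QQ s| + |G1 s 1 * ((v:ℝ) / v0 - 1)| := abs_sub _ _
      _ ≤ 1 / 2 + 1 / 6 := add_le_add h1 h3
      _ ≤ _ := by nlinarith

def vv {d : ℕ} (α x : Fin d → ℝ) : ℝ≥0 := ∑ i, NNReal.mk (x i ^ 2) (sq_nonneg _) * Real.toNNReal (α i)

instance {d : ℕ} (α : Fin d → ℝ) : IsProbabilityMeasure (gaussPi d α) := by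
  unfold gaussPi; infer_instance

lemma dotp_meas {d : ℕ} : Measurable (fun xy : (Fin d → ℝ) × (Fin d → ℝ) => dotp xy.1 xy.2) := by
  unfold dotp; fun_prop

lemma dotp_meas' {d : ℕ} (x : Fin d → ℝ) : Measurable (fun y : Fin d → ℝ => dotp x y) := by
  unfold dotp; fun_prop

lemma map_dotp {d : ℕ} (α x : Fin d → ℝ) :
    (gaussPi d α).map (fun y => dotp x y) = gaussianReal 0 (vv α x) := by
  have h1 : (gaussPi d α).map (fun y i => x i * y i) =
      Measure.pi fun i => gaussianReal 0 (NNReal.mk (x i ^ 2) (sq_nonneg _) * Real.toNNReal (α i)) := by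
    rw [gaussPi, Measure.pi_map_pi (f := fun i y => x i * y) (fun i => by fun_prop)]
    congr 1; ext1 i
    rw [gaussianReal_map_const_mul, mul_zero]
  have h2 : (gaussPi d α).map (fun y => dotp x y) =
      ((gaussPi d α).map (fun y i => x i * y i)).map (fun p => ∑ i, p i) := by
    rw [Measure.map_map (by fun_prop) (by fun_prop)]
    rfl
  have : IsProbabilityMeasure ((gaussPi d α).map (fun y => dotp x y)) :=
    Measure.isProbabilityMeasure_map (dotp_meas' x).aemeasurable
  refine Measure.ext_of_charFun ?_
  rw [h2, h1, charFun_map_sum_pi_eq_prod]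
  ext t
  simp only [Finset.prod_apply, charFun_gaussianReal, ← Complex.exp_sum]
  congr 1
  simp only [vv, NNReal.coe_sum, Complex.ofReal_sum, Complex.ofReal_zero, mul_zero, zero_mul, zero_sub,
    Finset.sum_mul, Finset.sum_div, Finset.sum_neg_distrib]

lemma cond_eq {d : ℕ} (α : Fin d → ℝ) (t : ℝ) (x : Fin d → ℝ) :
    (gaussPi d α).real (Prod.mk x ⁻¹' {xy | t ≤ dotp xy.1 xy.2}) = gg t (vv α x) := by
  rw [gg, ← map_dotp, map_measureReal_apply (dotp_meas' x) measurableSet_Ici]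
  rfl

lemma set_meas {d : ℕ} (t : ℝ) :
    MeasurableSet {xy : (Fin d → ℝ) × (Fin d → ℝ) | t ≤ dotp xy.1 xy.2} :=
  measurableSet_le measurable_const dotp_meas

lemma gg_meas {d : ℕ} (α : Fin d → ℝ) (t : ℝ) : Measurable (fun x => gg t (vv α x)) := by
  simp only [← cond_eq, Measure.real]
  exact (measurable_measure_prodMk_left (set_meas t)).ennreal_toReal

lemma gg_int {d : ℕ} (α : Fin d → ℝ) (t : ℝ) :
    Integrable (fun x => gg t (vv α x)) (gaussPi d α) := by
  refine Integrable.of_bound (gg_meas α t).aestronglyMeasurable 1 (ae_of_all _ fun x => ?_)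
  rw [Real.norm_eq_abs, abs_of_nonneg (gg_nonneg _ _)]
  exact gg_le_one _ _

lemma p_eq {d : ℕ} (α : Fin d → ℝ) {p t : ℝ} (hp : 0 ≤ p) (h : IsThreshold d α p t) :
    p = ∫ x, gg t (vv α x) ∂(gaussPi d α) := by
  unfold IsThreshold at h
  rw [Measure.prod_apply (set_meas t)] at h
  simp only [← cond_eq, Measure.real]
  rw [integral_toReal (measurable_measure_prodMk_left (set_meas t)).aemeasurable
    (ae_of_all _ fun x => measure_lt_top _ _), h, ENNReal.toReal_ofReal hp]

lemma vv_coe {d : ℕ} {α : Fin d → ℝ} (hα : ∀ i, 0 ≤ α i) (x : Fin d → ℝ) :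
    (vv α x : ℝ) = ∑ i, α i * x i ^ 2 := by
  simp only [vv, NNReal.coe_sum, NNReal.coe_mul, NNReal.coe_mk]
  exact Finset.sum_congr rfl fun i _ => by rw [Real.coe_toNNReal _ (hα i), mul_comm]

lemma memLp_sq (c : ℝ) (v : ℝ≥0) : MemLp (fun x : ℝ => c * x ^ 2) 2 (gaussianReal 0 v) := by
  have h := memLp_id_gaussianReal (μ := 0) (v := v) 4
  refine MemLp.const_mul ?_ c
  rw [memLp_two_iff_integrable_sq (by fun_prop)]
  have := h.integrable_norm_pow (p := 4) (by norm_num)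
  refine this.congr (ae_of_all _ fun x => ?_)
  simp only [id, Real.norm_eq_abs]
  rw [← abs_pow, abs_of_nonneg (by positivity)]; ring

lemma var_sq (c : ℝ) (v : ℝ≥0) :
    Var[fun x : ℝ => c * x ^ 2; gaussianReal 0 v] = 2 * c ^ 2 * v ^ 2 := by
  rw [variance_eq_sub (memLp_sq c v)]
  have e : ((fun x : ℝ => c * x ^ 2) ^ 2) = fun x => c ^ 2 * x ^ 4 := by
    ext x; simp; ring
  rw [e, integral_const_mul, integral_const_mul, mom2, mom4]
  ring

lemma vv_memLp {d : ℕ} {α : Fin d → ℝ} (hα : ∀ i, 0 ≤ α i) :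
    MemLp (fun x => (vv α x : ℝ)) 2 (gaussPi d α) := by
  simp only [vv_coe hα]
  refine memLp_finsetSum _ fun i _ => ?_
  exact (memLp_sq (α i) (Real.toNNReal (α i))).comp_measurePreserving
    (measurePreserving_eval (fun i => gaussianReal 0 (Real.toNNReal (α i))) i)

lemma vv_mean {d : ℕ} {α : Fin d → ℝ} (hα : ∀ i, 0 ≤ α i) :
    ∫ x, (vv α x : ℝ) ∂(gaussPi d α) = ∑ i, α i ^ 2 := by
  simp only [vv_coe hα]
  have hmp := fun i => measurePreserving_eval (fun i => gaussianReal 0 (Real.toNNReal (α i))) i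
  rw [integral_finsetSum]
  · refine Finset.sum_congr rfl fun i _ => ?_
    have := integral_map (μ := gaussPi d α) (hmp i).measurable.aemeasurable
      (f := fun y : ℝ => α i * y ^ 2) (by fun_prop)
    have hm : (gaussPi d α).map (Function.eval i) = _ := (hmp i).map_eq
    rw [hm, integral_const_mul, mom2, Real.coe_toNNReal _ (hα i)] at this
    rw [← sq] at this
    exact this.symm
  · intro i _
    exact ((memLp_sq (α i) (Real.toNNReal (α i))).comp_measurePreserving (hmp i)).integrable
      (by norm_num)

lemma vv_var {d : ℕ} {α : Fin d → ℝ} (hα : ∀ i, 0 ≤ α i) :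
    ∫ x, ((vv α x : ℝ) - ∑ i, α i ^ 2) ^ 2 ∂(gaussPi d α) = 2 * ∑ i, α i ^ 4 := by
  have h := variance_sum_pi (μ := fun i => gaussianReal 0 (Real.toNNReal (α i)))
    (X := fun i y => α i * y ^ 2) (fun i => memLp_sq _ _)
  have e : (∑ i, fun ω : Fin d → ℝ ↦ α i * ω i ^ 2) = fun x => (vv α x : ℝ) := by
    ext x; simp [vv_coe hα]
  simp only [e, var_sq] at h
  change Var[fun x => (vv α x : ℝ); gaussPi d α] = _ at h
  rw [variance_eq_integral (vv_memLp hα).aestronglyMeasurable.aemeasurable, vv_mean hα] at h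
  rw [h, Finset.mul_sum]
  refine Finset.sum_congr rfl fun i _ => ?_
  rw [Real.coe_toNNReal _ (hα i)]; ring

lemma main_bound {d : ℕ} {α : Fin d → ℝ} (hα : ∀ i, 0 ≤ α i) {p t : ℝ} (hp : 0 ≤ p)
    (h : IsThreshold d α p t) {V : ℝ} (hV : V = ∑ i, α i ^ 2) (hV0 : 0 < V) :
    |p - QQ (t / √V)| ≤ 3 * (∑ i, α i ^ 4) / V ^ 2 := by
  obtain ⟨v0, rfl⟩ : ∃ v0 : ℝ≥0, V = v0 := ⟨⟨V, hV0.le⟩, rfl⟩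
  have hv0 : v0 ≠ 0 := by exact_mod_cast hV0.ne'
  set c := G1 (t / √(v0:ℝ)) 1
  have hi1 : Integrable (fun x => (vv α x : ℝ)) (gaussPi d α) :=
    (vv_memLp hα).integrable (by norm_num)
  have hi2 : Integrable (fun x => c * ((vv α x : ℝ) / v0 - 1)) (gaussPi d α) :=
    ((hi1.div_const _).sub (integrable_const _)).const_mul _
  have hi3 : Integrable (fun x => gg t (vv α x) - QQ (t / √(v0:ℝ))) (gaussPi d α) :=
    (gg_int α t).sub (integrable_const _)
  have e1 : ∫ x, (gg t (vv α x) - QQ (t / √(v0:ℝ)) - c * ((vv α x : ℝ) / v0 - 1)) ∂(gaussPi d α)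
      = p - QQ (t / √(v0:ℝ)) := by
    rw [integral_sub hi3 hi2, integral_sub (gg_int α t) (integrable_const _), integral_const_mul,
      integral_sub (hi1.div_const _) (integrable_const _), integral_div, vv_mean hα, ← hV,
      ← p_eq α hp h]
    simp [hv0]
  have e2 : ∀ x, 3 / 2 * ((vv α x : ℝ) / v0 - 1) ^ 2 =
      3 / 2 / (v0:ℝ) ^ 2 * ((vv α x : ℝ) - ∑ i, α i ^ 2) ^ 2 := by
    intro x
    rw [← hV]; field_simp
  rw [← e1, ← Real.norm_eq_abs]
  refine (norm_integral_le_integral_norm _).trans ?_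
  have hi4 : Integrable (fun x => 3 / 2 / (v0:ℝ) ^ 2 * ((vv α x : ℝ) - ∑ i, α i ^ 2) ^ 2)
      (gaussPi d α) := by
    have := ((vv_memLp hα).sub (memLp_const (∑ i, α i ^ 2))).integrable_sq
    exact this.const_mul _
  refine (integral_mono (hi3.sub hi2).norm hi4 fun x => ?_).trans ?_
  · show ‖gg t (vv α x) - QQ (t / √(v0:ℝ)) - c * ((vv α x : ℝ) / v0 - 1)‖ ≤ _
    rw [Real.norm_eq_abs, ← e2]
    exact gg_taylor t _ v0 hv0
  · rw [integral_const_mul, vv_var hα]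
    apply le_of_eq; ring

lemma cheb_pos {d : ℕ} {α : Fin d → ℝ} (hα : ∀ i, 0 ≤ α i) {p t : ℝ} (hp : 0 ≤ p)
    (h : IsThreshold d α p t) (ht : 0 < t) : p ≤ (∑ i, α i ^ 2) / t ^ 2 := by
  have hi1 : Integrable (fun x => (vv α x : ℝ)) (gaussPi d α) :=
    (vv_memLp hα).integrable (by norm_num)
  rw [p_eq α hp h, ← vv_mean hα, ← integral_div]
  exact integral_mono (gg_int α t) (hi1.div_const _) fun x => gg_cheb_pos _ ht

lemma cheb_neg {d : ℕ} {α : Fin d → ℝ} (hα : ∀ i, 0 ≤ α i) {p t : ℝ} (hp : 0 ≤ p)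
    (h : IsThreshold d α p t) (ht : t < 0) : 1 - p ≤ (∑ i, α i ^ 2) / t ^ 2 := by
  have hi1 : Integrable (fun x => (vv α x : ℝ)) (gaussPi d α) :=
    (vv_memLp hα).integrable (by norm_num)
  have : 1 - p = ∫ x, (1 - gg t (vv α x)) ∂(gaussPi d α) := by
    rw [integral_sub (integrable_const _) (gg_int α t), ← p_eq α hp h]; simp
  rw [this, ← vv_mean hα, ← integral_div]
  exact integral_mono ((integrable_const _).sub (gg_int α t)) (hi1.div_const _)
    fun x => gg_cheb_neg _ ht

lemma QQ_lower {M a b : ℝ} (ha : |a| ≤ M) (hb : |b| ≤ M) :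
    gaussianPDFReal 0 1 M * |a - b| ≤ |QQ a - QQ b| := by
  wlog hab : a ≤ b generalizing a b
  · rw [abs_sub_comm, abs_sub_comm (QQ a)]
    exact this hb ha (le_of_not_ge hab)
  have h1 : gaussianPDFReal 0 1 M * (b - a) ≤ QQ a - QQ b := by
    rw [QQ_sub]
    have : ∫ x in a..b, gaussianPDFReal 0 1 M = gaussianPDFReal 0 1 M * (b - a) := by
      simp [mul_comm]
    rw [← this]
    refine intervalIntegral.integral_mono_on hab (by simp) (cont_pdf01.intervalIntegrable _ _) ?_
    intro x hx
    rw [pdf01, pdf01]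
    have : |x| ≤ M := abs_le.2 ⟨(abs_le.1 ha).1.trans hx.1, hx.2.trans (abs_le.1 hb).2⟩
    have : x ^ 2 ≤ M ^ 2 := by rw [← sq_abs x]; gcongr
    gcongr
  rw [abs_sub_comm, abs_of_nonneg (sub_nonneg.2 hab)]
  exact h1.trans (le_abs_self _)

lemma nrm2 {d : ℕ} (α : Fin d → ℝ) : nrm 2 α = √(∑ i, α i ^ 2) := by
  rw [nrm, Real.sqrt_eq_rpow]; norm_num

lemma nrm3 {d : ℕ} {α : Fin d → ℝ} (hα : ∀ i, 0 ≤ α i) : nrm 3 α ^ 3 = ∑ i, α i ^ 3 := by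
  rw [nrm, ← Real.rpow_natCast, ← Real.rpow_mul (Finset.sum_nonneg fun i _ => pow_nonneg (hα i) 3)]
  norm_num

/-- Lemma 4. With `t_p` the upper-`p` quantile of the standard Gaussian,
there is a constant `k_p > 0` depending only on `p` such that
`‖α‖₂ t_p - k_p ≤ t_{p,α} ≤ ‖α‖₂ t_p + k_p`; moreover, with
`p' = ℙ(Z > t_{p,α}/‖α‖₂)`, one has `|p - p'| ≤ 3 (‖α‖₃/‖α‖₂)³`. -/
theorem threshold_bounds (p : ℝ) (hp : p ∈ Set.Ioo (0 : ℝ) 1)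
    (tp : ℝ) (htp : (gaussianReal 0 1) (Set.Ici tp) = ENNReal.ofReal p) :
    ∃ k > (0 : ℝ), ∀ (d : ℕ) (α : Fin d → ℝ),
      (∀ i, α i ∈ Set.Icc (0 : ℝ) 1) → (∃ i, α i = 1) →
      ∀ t : ℝ, IsThreshold d α p t →
        (nrm 2 α * tp - k ≤ t ∧ t ≤ nrm 2 α * tp + k) ∧
        |p - ((gaussianReal 0 1) (Set.Ioi (t / nrm 2 α))).toReal|
          ≤ 3 * (nrm 3 α / nrm 2 α) ^ 3 := by
  have hQ : QQ tp = p := by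
    rw [← QQ_Ici, Measure.real, htp, ENNReal.toReal_ofReal hp.1.le]
  obtain ⟨hp0, hp1⟩ := hp
  set M : ℝ := |tp| + √(1 / p) + √(1 / (1 - p)) with hM
  have hφ : 0 < gaussianPDFReal 0 1 M := gaussianPDFReal_pos _ _ _ (by simp)
  refine ⟨3 / gaussianPDFReal 0 1 M, by positivity, ?_⟩
  intro d α hα ⟨j, hj⟩ t ht
  have h0 : ∀ i, 0 ≤ α i := fun i => (hα i).1
  have h1 : ∀ i, α i ≤ 1 := fun i => (hα i).2
  obtain ⟨V, hV⟩ : ∃ V, V = ∑ i, α i ^ 2 := ⟨_, rfl⟩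
  have hV1 : 1 ≤ V := by
    have := Finset.single_le_sum (f := fun i => α i ^ 2) (fun i _ => sq_nonneg (α i))
      (Finset.mem_univ j)
    rw [hV]; simpa [hj] using this
  have hV0 : 0 < V := by linarith
  have hb := main_bound h0 hp0.le ht hV hV0
  have hN : nrm 2 α = √V := by rw [nrm2, hV]
  obtain ⟨N, hNN⟩ : ∃ N, N = √V := ⟨_, rfl⟩
  have hN0 : 0 < N := by rw [hNN]; exact Real.sqrt_pos.2 hV0
  have hN1 : 1 ≤ N := by rw [hNN]; exact Real.one_le_sqrt.2 hV1
  have hNV : N ^ 2 = V := by rw [hNN]; exact Real.sq_sqrt hV0.le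
  rw [← hNN] at hb
  rw [hN, ← hNN]
  -- fourth power sums against cubes and squares
  have hαN : ∀ i, α i ≤ N := fun i => (h1 i).trans hN1
  have h43 : ∑ i, α i ^ 4 ≤ N * ∑ i, α i ^ 3 := by
    rw [Finset.mul_sum]
    refine Finset.sum_le_sum fun i _ => ?_
    have := mul_le_mul_of_nonneg_right (hαN i) (pow_nonneg (h0 i) 3)
    nlinarith
  have h42 : ∑ i, α i ^ 4 ≤ V := by
    rw [hV]
    refine Finset.sum_le_sum fun i _ => ?_
    exact pow_le_pow_of_le_one (h0 i) (h1 i) (by norm_num)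
  refine ⟨?_, ?_⟩
  · -- part (i)
    have hs : |t / N| ≤ M := by
      have q1 := Real.sqrt_nonneg (1 / p)
      have q2 := Real.sqrt_nonneg (1 / (1 - p))
      have q3 := abs_nonneg tp
      have gen : ∀ q : ℝ, 0 < q → t ≠ 0 → q ≤ V / t ^ 2 → |t / N| ≤ √(1 / q) := by
        intro q hq ht0 hh
        apply Real.le_sqrt_of_sq_le
        have ht2 : 0 < t ^ 2 := by positivity
        rw [sq_abs, div_pow, hNV, div_le_div_iff₀ hV0 hq]
        rw [le_div_iff₀ ht2] at hh
        linarith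
      rcases lt_trichotomy t 0 with h | h | h
      · have := gen (1 - p) (by linarith) h.ne (by rw [hV]; exact cheb_neg h0 hp0.le ht h)
        linarith
      · rw [h]; simp; positivity
      · have := gen p hp0 h.ne' (by rw [hV]; exact cheb_pos h0 hp0.le ht h)
        linarith
    have htM : |tp| ≤ M := by
      have q1 := Real.sqrt_nonneg (1 / p)
      have q2 := Real.sqrt_nonneg (1 / (1 - p))
      linarith
    have hlow := QQ_lower htM hs
    rw [hQ] at hlow
    have hup : |p - QQ (t / N)| ≤ 3 / N := by
      refine hb.trans ?_
      rw [div_le_div_iff₀ (by positivity) hN0, ← hNV]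
      rw [← hNV] at h42
      have hA : 0 ≤ ∑ i, α i ^ 4 := Finset.sum_nonneg fun i _ => pow_nonneg (h0 i) 4
      have : N ^ 2 * N ≤ (N ^ 2) ^ 2 := by
        nlinarith [pow_pos hN0 3]
      nlinarith [mul_le_mul_of_nonneg_right h42 hN0.le]
    have hfin : |t - N * tp| ≤ 3 / gaussianPDFReal 0 1 M := by
      have e : |t - N * tp| = N * |tp - t / N| := by
        rw [← abs_of_pos hN0, ← abs_mul, abs_of_pos hN0, abs_sub_comm]
        congr 1; field_simp
      rw [e, le_div_iff₀ hφ]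
      have := hlow.trans hup
      rw [le_div_iff₀ hN0] at this
      linarith
    rw [abs_le] at hfin
    constructor <;> linarith [hfin.1, hfin.2]
  · -- part (ii)
    refine hb.trans ?_
    rw [div_pow, nrm3 h0, mul_div_assoc]
    refine mul_le_mul_of_nonneg_left ?_ (by norm_num)
    rw [div_le_div_iff₀ (by positivity) (by positivity), ← hNV]
    calc _ ≤ (N * ∑ i, α i ^ 3) * N ^ 3 := by gcongr
      _ = _ := by ring

end
end

section
/- There exist absolute constants c, C, ε > 0 such that the following holds for every α ∈ ℝ^d with entries in [0,1], at least one entry equal to 1, and ‖α‖₂² > c. Define φ₁(a,b,c) = ∏_{i=1}^d (1 + (α_i²/‖α‖₂²)(a²+b²+c²) + 2(α_i³/‖α‖₂³)abc·i)^{−1/2} (principal branch) and ψ₁(a,b,c) = ∏_{i=1}^d ((1+α_i²a²/‖α‖₂²)(1+α_i²b²/‖α‖₂²)(1+α_i²c²/‖α‖₂²))^{−1/2}. Then ∫_{ℝ³} |Re(φ₁(a,b,c)) − ψ₁(a,b,c)| da db dc ≤ C·(‖α‖₃/‖α‖₂)^{3+ε}. -/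
open MeasureTheory ProbabilityTheory Real Filter
open scoped Classical ENNReal NNReal

noncomputable section

/-- The rescaled characteristic function `φ₁` of `(⟨X₁,X₂⟩,⟨X₁,X₃⟩,⟨X₂,X₃⟩)/‖α‖₂`
(principal branch). -/
def phi1 (d : ℕ) (α : Fin d → ℝ) (a b c : ℝ) : ℂ :=
  ∏ i, ((1 : ℂ) + ((α i : ℂ) ^ 2 / (nrm 2 α : ℂ) ^ 2)
        * ((a : ℂ) ^ 2 + (b : ℂ) ^ 2 + (c : ℂ) ^ 2)
      + 2 * ((α i : ℂ) ^ 3 / (nrm 2 α : ℂ) ^ 3) * (a : ℂ) * (b : ℂ) * (c : ℂ) * Complex.I)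
    ^ (-(1 / 2 : ℂ))

/-- The characteristic function `ψ₁` of the independent-coordinates version. -/
def psi1 (d : ℕ) (α : Fin d → ℝ) (a b c : ℝ) : ℝ :=
  ∏ i, ((1 + (α i) ^ 2 * a ^ 2 / nrm 2 α ^ 2) * (1 + (α i) ^ 2 * b ^ 2 / nrm 2 α ^ 2)
      * (1 + (α i) ^ 2 * c ^ 2 / nrm 2 α ^ 2)) ^ (-(1 / 2 : ℝ))

lemma aux_arg (x y : ℝ) (hx : 1 ≤ x) : |((x : ℂ) + (y : ℂ) * Complex.I).arg| ≤ |y| := by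
  have hre : ((x : ℂ) + (y : ℂ) * Complex.I).re = x := by simp
  have him : ((x : ℂ) + (y : ℂ) * Complex.I).im = y := by simp
  set w : ℂ := (x : ℂ) + (y : ℂ) * Complex.I with hw
  have hlt : |w.arg| < π / 2 := by
    rw [Complex.abs_arg_lt_pi_div_two_iff]; left; rw [hre]; linarith
  have h1 : Real.tan |w.arg| = |y| / x := by
    rcases abs_cases w.arg with ⟨h, _⟩ | ⟨h, h'⟩
    · have : 0 ≤ y := by rw [← him]; exact Complex.arg_nonneg_iff.mp (by linarith)
      rw [h, Complex.tan_arg, hre, him, abs_of_nonneg this]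
    · have : y < 0 := by rw [← him]; exact Complex.arg_neg_iff.mp h'
      rw [h, Real.tan_neg, Complex.tan_arg, hre, him, abs_of_neg this]; ring
  have h2 : |w.arg| ≤ Real.tan |w.arg| := Real.le_tan (abs_nonneg _) hlt
  calc |w.arg| ≤ |y| / x := by rw [← h1]; exact h2
    _ ≤ |y| := div_le_self (abs_nonneg _) hx

lemma aux_lognorm (x y : ℝ) (hx : 1 ≤ x) :
    0 ≤ Real.log ‖(x : ℂ) + (y : ℂ) * Complex.I‖ - Real.log x ∧
    Real.log ‖(x : ℂ) + (y : ℂ) * Complex.I‖ - Real.log x ≤ y ^ 2 / 2 := by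
  have hn : ‖(x : ℂ) + (y : ℂ) * Complex.I‖ ^ 2 = x ^ 2 + y ^ 2 := by
    rw [Complex.sq_norm, Complex.normSq_add_mul_I]
  set n := ‖(x : ℂ) + (y : ℂ) * Complex.I‖ with hndef
  have hn0 : 0 ≤ n := norm_nonneg _
  have hxn : x ≤ n := by
    apply le_of_sq_le_sq _ hn0
    nlinarith [sq_nonneg y]
  have hx0 : 0 < x := by linarith
  have hnp : 0 < n := by linarith
  constructor
  · have := Real.log_le_log hx0 hxn; linarith
  · have h2 : 2 * (Real.log n - Real.log x) = Real.log (n ^ 2 / x ^ 2) := by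
      rw [Real.log_div (by positivity) (by positivity), Real.log_pow, Real.log_pow]; push_cast; ring
    have h3 : Real.log (n ^ 2 / x ^ 2) ≤ n ^ 2 / x ^ 2 - 1 :=
      Real.log_le_sub_one_of_pos (by positivity)
    have h4 : n ^ 2 / x ^ 2 - 1 ≤ y ^ 2 := by
      rw [hn, add_div, div_self (by positivity)]
      have : y ^ 2 / x ^ 2 ≤ y ^ 2 := div_le_self (sq_nonneg y) (by nlinarith)
      linarith
    linarith

lemma aux_core {d : ℕ} (A u B : Fin d → ℝ) (hA : ∀ i, 1 ≤ A i) (hAB : ∀ i, A i ≤ B i) :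
    |(∏ i, ((A i : ℂ) + (u i : ℂ) * Complex.I) ^ (-(1 / 2 : ℂ))).re
        - ∏ i, (B i) ^ (-(1 / 2 : ℝ))|
      ≤ Real.exp (-(1 / 2) * ∑ i, Real.log (A i)) *
        ((∑ i, (B i - A i)) / 2 + (∑ i, u i ^ 2) / 4 + (∑ i, |u i|) ^ 2 / 8) := by
  have hW : ∀ i, (A i : ℂ) + (u i : ℂ) * Complex.I ≠ 0 := by
    intro i h
    have := congrArg Complex.re h
    simp at this
    linarith [hA i]
  have e1 : (∏ i, ((A i : ℂ) + (u i : ℂ) * Complex.I) ^ (-(1 / 2 : ℂ))) =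
      Complex.exp (∑ i, Complex.log ((A i : ℂ) + (u i : ℂ) * Complex.I) * (-(1 / 2 : ℂ))) := by
    rw [Complex.exp_sum]
    exact Finset.prod_congr rfl fun i _ => Complex.cpow_def_of_ne_zero (hW i) _
  have ere : (∑ i, Complex.log ((A i : ℂ) + (u i : ℂ) * Complex.I) * (-(1 / 2 : ℂ))).re =
      -(1/2) * ∑ i, Real.log ‖(A i : ℂ) + (u i : ℂ) * Complex.I‖ := by
    rw [Complex.re_sum, Finset.mul_sum]
    refine Finset.sum_congr rfl fun i _ => ?_
    have : (-(1 / 2 : ℂ)) = ((-(1/2) : ℝ) : ℂ) := by push_cast; ring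
    rw [this, Complex.re_mul_ofReal, Complex.log_re]; ring
  have eim : (∑ i, Complex.log ((A i : ℂ) + (u i : ℂ) * Complex.I) * (-(1 / 2 : ℂ))).im =
      -(1/2) * ∑ i, Complex.arg ((A i : ℂ) + (u i : ℂ) * Complex.I) := by
    rw [Complex.im_sum, Finset.mul_sum]
    refine Finset.sum_congr rfl fun i _ => ?_
    have : (-(1 / 2 : ℂ)) = ((-(1/2) : ℝ) : ℂ) := by push_cast; ring
    rw [this, Complex.im_mul_ofReal, Complex.log_im]; ring
  have e2 : ∏ i, (B i) ^ (-(1 / 2 : ℝ)) = Real.exp (-(1 / 2) * ∑ i, Real.log (B i)) := by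
    rw [Finset.mul_sum, Real.exp_sum]
    refine Finset.prod_congr rfl fun i _ => ?_
    rw [Real.rpow_def_of_pos (by linarith [hA i, hAB i]), mul_comm]
  rw [e1, Complex.exp_re, ere, eim, e2]
  set LA := ∑ i, Real.log (A i) with hLA
  set LB := ∑ i, Real.log (B i) with hLB
  set LW := ∑ i, Real.log ‖(A i : ℂ) + (u i : ℂ) * Complex.I‖ with hLW
  set Y := ∑ i, Complex.arg ((A i : ℂ) + (u i : ℂ) * Complex.I) with hY
  have hB1 : 0 ≤ LB - LA := by
    rw [hLA, hLB, ← Finset.sum_sub_distrib]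
    refine Finset.sum_nonneg fun i _ => ?_
    have := Real.log_le_log (by linarith [hA i]) (hAB i)
    linarith
  have hB2 : LB - LA ≤ ∑ i, (B i - A i) := by
    rw [hLA, hLB, ← Finset.sum_sub_distrib]
    refine Finset.sum_le_sum fun i _ => ?_
    have h1 := hA i
    have h2 := hAB i
    rw [← Real.log_div (by linarith) (by linarith)]
    have h3 := Real.log_le_sub_one_of_pos (show 0 < B i / A i by apply div_pos <;> linarith)
    have h4 : B i / A i - 1 = (B i - A i) / A i := by
      field_simp
    have h5 : (B i - A i) / A i ≤ B i - A i := div_le_self (by linarith) h1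
    linarith
  have hW1 : 0 ≤ LW - LA := by
    rw [hLA, hLW, ← Finset.sum_sub_distrib]
    exact Finset.sum_nonneg fun i _ => (aux_lognorm _ _ (hA i)).1
  have hW2 : LW - LA ≤ (∑ i, u i ^ 2) / 2 := by
    rw [hLA, hLW, ← Finset.sum_sub_distrib, Finset.sum_div]
    exact Finset.sum_le_sum fun i _ => (aux_lognorm _ _ (hA i)).2
  have hYb : |Y| ≤ ∑ i, |u i| :=
    (Finset.abs_sum_le_sum_abs _ _).trans (Finset.sum_le_sum fun i _ => aux_arg _ _ (hA i))
  have hY2 : Y ^ 2 ≤ (∑ i, |u i|) ^ 2 := by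
    rw [← sq_abs Y]; gcongr
  set G := Real.exp (-(1/2) * LA) with hG
  have hGpos : 0 < G := Real.exp_pos _
  have eB : Real.exp (-(1/2) * LB) = G * Real.exp (-(1/2) * (LB - LA)) := by
    rw [hG, ← Real.exp_add]; congr 1; ring
  have eW : Real.exp (-(1/2) * LW) = G * Real.exp (-(1/2) * (LW - LA)) := by
    rw [hG, ← Real.exp_add]; congr 1; ring
  rw [eB, eW]
  have b1 := Real.add_one_le_exp (-(1/2) * (LB - LA))
  have b2 : Real.exp (-(1/2) * (LB - LA)) ≤ 1 := Real.exp_le_one_iff.mpr (by linarith)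
  have w1 := Real.add_one_le_exp (-(1/2) * (LW - LA))
  have w2 : Real.exp (-(1/2) * (LW - LA)) ≤ 1 := Real.exp_le_one_iff.mpr (by linarith)
  have w0 : 0 < Real.exp (-(1/2) * (LW - LA)) := Real.exp_pos _
  have c1 := Real.one_sub_sq_div_two_le_cos (x := -(1/2) * Y)
  have c2 := Real.cos_le_one (-(1/2) * Y)
  set eb := Real.exp (-(1/2) * (LB - LA))
  set ew := Real.exp (-(1/2) * (LW - LA))
  set cs := Real.cos (-(1/2) * Y)
  have key : |ew * cs - eb| ≤
      (∑ i, (B i - A i)) / 2 + (∑ i, u i ^ 2) / 4 + (∑ i, |u i|) ^ 2 / 8 := by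
    have k1 : ew * (1 - cs) ≤ 1 - cs := by nlinarith
    have k2 : 0 ≤ ew * (1 - cs) := by apply mul_nonneg <;> linarith
    have k3 : 1 - cs ≤ Y ^ 2 / 8 := by linarith
    have k4 : 0 ≤ Y ^ 2 := sq_nonneg _
    rw [abs_le]; constructor <;> nlinarith
  rw [show G * ew * cs - G * eb = G * (ew * cs - eb) by ring, abs_mul, abs_of_pos hGpos]
  exact mul_le_mul_of_nonneg_left key hGpos.le

lemma aux_G {d : ℕ} (p : Fin d → ℝ) (S : ℝ) (hS : 0 ≤ S) (hp0 : ∀ i, 0 ≤ p i)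
    (hp : ∀ i, p i ≤ 1 / 12) (hsum : ∑ i, p i = 1) :
    Real.exp (-(1 / 2) * ∑ i, Real.log (1 + p i * S)) ≤ ((1 + S / 12) ^ 6)⁻¹ := by
  have h1 : 12 * Real.log (1 + S / 12) ≤ ∑ i, Real.log (1 + p i * S) := by
    have : 12 * Real.log (1 + S / 12) = ∑ i, p i * (12 * Real.log (1 + S / 12)) := by
      rw [← Finset.sum_mul, hsum, one_mul]
    rw [this]
    refine Finset.sum_le_sum fun i _ => ?_
    have hb := rpow_one_add_le_one_add_mul_self (s := S / 12) (by linarith [div_nonneg hS (by norm_num : (0:ℝ) ≤ 12)])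
      (p := 12 * p i) (by linarith [hp0 i]) (by linarith [hp i])
    have hpos : (0 : ℝ) < 1 + S / 12 := by positivity
    have := Real.log_le_log (Real.rpow_pos_of_pos hpos _) hb
    rw [Real.log_rpow hpos] at this
    rw [show 1 + p i * S = 1 + 12 * p i * (S / 12) by ring]
    linarith
  have hpos : (0 : ℝ) < 1 + S / 12 := by positivity
  have h2 : ((1 + S / 12) ^ 6)⁻¹ = Real.exp (-(6 * Real.log (1 + S / 12))) := by
    rw [Real.exp_neg]
    congr 1
    rw [show 6 * Real.log (1 + S / 12) = Real.log ((1 + S / 12) ^ 6) by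
      rw [Real.log_pow]; norm_num]
    rw [Real.exp_log (by positivity)]
  rw [h2]
  exact Real.exp_le_exp.mpr (by linarith)

/-- the integrable majorant -/
def gmaj (x : ℝ) : ℝ := (1 + (x * (Real.sqrt 12)⁻¹) ^ 2)⁻¹

lemma gmaj_eq (x : ℝ) : gmaj x = (1 + x ^ 2 / 12)⁻¹ := by
  unfold gmaj
  rw [mul_pow, inv_pow, Real.sq_sqrt (by norm_num)]; rfl

lemma gmaj_int : Integrable gmaj := by
  unfold gmaj
  exact integrable_inv_one_add_sq.comp_mul_right' (R := (Real.sqrt 12)⁻¹) (by positivity)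

lemma gmaj3_int : Integrable (fun v : ℝ × ℝ × ℝ => gmaj v.1 * (gmaj v.2.1 * gmaj v.2.2)) :=
  gmaj_int.mul_prod (gmaj_int.mul_prod gmaj_int)

lemma aux_point {d : ℕ} (r : Fin d → ℝ) (X a b c : ℝ) (hr : ∀ i, 0 ≤ r i)
    (hr2 : ∀ i, r i ^ 2 ≤ 1 / 12) (hsum : ∑ i, r i ^ 2 = 1)
    (h3 : ∑ i, r i ^ 3 = X ^ 3) (h4 : ∑ i, r i ^ 4 ≤ X ^ 4) (hX0 : 0 ≤ X) (hX1 : X ≤ 1) :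
    |(∏ i, (((1 + r i ^ 2 * (a ^ 2 + b ^ 2 + c ^ 2) : ℝ) : ℂ)
        + ((2 * r i ^ 3 * (a * b * c) : ℝ) : ℂ) * Complex.I) ^ (-(1 / 2 : ℂ))).re
        - ∏ i, ((1 + r i ^ 2 * a ^ 2) * (1 + r i ^ 2 * b ^ 2) * (1 + r i ^ 2 * c ^ 2))
          ^ (-(1 / 2 : ℝ))|
      ≤ 17280 * X ^ 4 * (gmaj a * (gmaj b * gmaj c)) := by
  have core := aux_core (fun i => 1 + r i ^ 2 * (a ^ 2 + b ^ 2 + c ^ 2))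
    (fun i => 2 * r i ^ 3 * (a * b * c))
    (fun i => (1 + r i ^ 2 * a ^ 2) * (1 + r i ^ 2 * b ^ 2) * (1 + r i ^ 2 * c ^ 2))
    (fun i => by
      have : 0 ≤ r i ^ 2 * (a ^ 2 + b ^ 2 + c ^ 2) := by positivity
      linarith)
    (fun i => by
      have : 0 ≤ (r i ^ 2) ^ 2 * (a ^ 2 * b ^ 2 + a ^ 2 * c ^ 2 + b ^ 2 * c ^ 2)
        + (r i ^ 2) ^ 3 * (a ^ 2 * b ^ 2 * c ^ 2) := by positivity
      nlinarith)
  refine core.trans ?_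
  have hG := aux_G (fun i => r i ^ 2) (a ^ 2 + b ^ 2 + c ^ 2) (by positivity)
    (fun i => by positivity) hr2 hsum
  set S := a ^ 2 + b ^ 2 + c ^ 2 with hS
  have hS0 : 0 ≤ S := by positivity
  have ha : a ^ 2 ≤ S := by nlinarith [sq_nonneg b, sq_nonneg c]
  have hb : b ^ 2 ≤ S := by nlinarith [sq_nonneg a, sq_nonneg c]
  have hc : c ^ 2 ≤ S := by nlinarith [sq_nonneg b, sq_nonneg a]
  have habc : (a * b * c) ^ 2 ≤ S ^ 3 := by
    calc (a * b * c) ^ 2 = a ^ 2 * b ^ 2 * c ^ 2 := by ring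
      _ ≤ S * S * S := by gcongr
      _ = S ^ 3 := by ring
  have hpair : a ^ 2 * b ^ 2 + a ^ 2 * c ^ 2 + b ^ 2 * c ^ 2 ≤ S ^ 2 := by
    have h0 : 0 ≤ a ^ 2 * b ^ 2 + a ^ 2 * c ^ 2 + b ^ 2 * c ^ 2 := by positivity
    have h1 : 0 ≤ a ^ 4 + b ^ 4 + c ^ 4 := by positivity
    rw [hS]; nlinarith
  have hX4 : 0 ≤ X ^ 4 := by positivity
  have s1 : ∑ i, ((1 + r i ^ 2 * a ^ 2) * (1 + r i ^ 2 * b ^ 2) * (1 + r i ^ 2 * c ^ 2)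
      - (1 + r i ^ 2 * S)) ≤ X ^ 4 * (S ^ 2 + S ^ 3) := by
    calc _ ≤ ∑ i, r i ^ 4 * (S ^ 2 + S ^ 3) := by
          refine Finset.sum_le_sum fun i _ => ?_
          have h6 : r i ^ 6 ≤ r i ^ 4 := by
            have := hr2 i
            have h : 0 ≤ r i ^ 4 := by positivity
            nlinarith
          have e : (1 + r i ^ 2 * a ^ 2) * (1 + r i ^ 2 * b ^ 2) * (1 + r i ^ 2 * c ^ 2)
            - (1 + r i ^ 2 * S) = r i ^ 4 * (a ^ 2 * b ^ 2 + a ^ 2 * c ^ 2 + b ^ 2 * c ^ 2)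
              + r i ^ 6 * (a * b * c) ^ 2 := by rw [hS]; ring
          rw [e, mul_add (r i ^ 4) (S ^ 2)]
          have h4' : 0 ≤ r i ^ 4 := by positivity
          exact add_le_add (mul_le_mul_of_nonneg_left hpair h4')
            (mul_le_mul h6 habc (sq_nonneg _) h4')
      _ = (∑ i, r i ^ 4) * (S ^ 2 + S ^ 3) := by rw [Finset.sum_mul]
      _ ≤ _ := by gcongr
  have s2 : ∑ i, (2 * r i ^ 3 * (a * b * c)) ^ 2 ≤ 4 * X ^ 4 * S ^ 3 := by
    calc _ ≤ ∑ i, r i ^ 4 * (4 * S ^ 3) := by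
          refine Finset.sum_le_sum fun i _ => ?_
          have h6 : r i ^ 6 ≤ r i ^ 4 := by
            have := hr2 i
            have h : 0 ≤ r i ^ 4 := by positivity
            nlinarith
          have e : (2 * r i ^ 3 * (a * b * c)) ^ 2 = r i ^ 6 * (4 * (a * b * c) ^ 2) := by ring
          rw [e]
          exact mul_le_mul h6 (by linarith) (by positivity) (by positivity)
      _ = (∑ i, r i ^ 4) * (4 * S ^ 3) := by rw [Finset.sum_mul]
      _ ≤ X ^ 4 * (4 * S ^ 3) := by gcongr
      _ = _ := by ring
  have s3 : (∑ i, |2 * r i ^ 3 * (a * b * c)|) ^ 2 ≤ 4 * X ^ 4 * S ^ 3 := by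
    have e : ∑ i, |2 * r i ^ 3 * (a * b * c)| = X ^ 3 * (2 * |a * b * c|) := by
      rw [← h3, Finset.sum_mul]
      refine Finset.sum_congr rfl fun i _ => ?_
      have := hr i
      rw [abs_mul, abs_of_nonneg (by positivity : 0 ≤ 2 * r i ^ 3)]; ring
    rw [e, mul_pow, mul_pow, sq_abs]
    have h6 : (X ^ 3) ^ 2 ≤ X ^ 4 := by
      rw [← pow_mul]; exact pow_le_pow_of_le_one hX0 hX1 (by norm_num)
    calc (X ^ 3) ^ 2 * (2 ^ 2 * (a * b * c) ^ 2) ≤ X ^ 4 * (2 ^ 2 * S ^ 3) := by gcongr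
      _ = _ := by ring
  have hQ : (1 : ℝ) ≤ 1 + S / 12 := by have := div_nonneg hS0 (by norm_num : (0:ℝ) ≤ 12); linarith
  have tot : (∑ i, ((1 + r i ^ 2 * a ^ 2) * (1 + r i ^ 2 * b ^ 2) * (1 + r i ^ 2 * c ^ 2)
      - (1 + r i ^ 2 * S))) / 2 + (∑ i, (2 * r i ^ 3 * (a * b * c)) ^ 2) / 4
      + (∑ i, |2 * r i ^ 3 * (a * b * c)|) ^ 2 / 8 ≤ 17280 * X ^ 4 * (1 + S / 12) ^ 3 := by
    have h : X ^ 4 * (S ^ 2 + S ^ 3) / 2 + 4 * X ^ 4 * S ^ 3 / 4 + 4 * X ^ 4 * S ^ 3 / 8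
      ≤ 17280 * X ^ 4 * (1 + S / 12) ^ 3 := by
      have e : 17280 * X ^ 4 * (1 + S / 12) ^ 3
        - (X ^ 4 * (S ^ 2 + S ^ 3) / 2 + 4 * X ^ 4 * S ^ 3 / 4 + 4 * X ^ 4 * S ^ 3 / 8)
        = X ^ 4 * (17280 + 4320 * S + (360 - 1/2) * S ^ 2 + 8 * S ^ 3) := by ring
      have : 0 ≤ X ^ 4 * (17280 + 4320 * S + (360 - 1/2) * S ^ 2 + 8 * S ^ 3) := by
        norm_num; positivity
      linarith
    linarith
  calc _ ≤ ((1 + S / 12) ^ 6)⁻¹ * (17280 * X ^ 4 * (1 + S / 12) ^ 3) := by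
        apply mul_le_mul hG tot _ (by positivity)
        have : 0 ≤ ∑ i, ((1 + r i ^ 2 * a ^ 2) * (1 + r i ^ 2 * b ^ 2) * (1 + r i ^ 2 * c ^ 2)
            - (1 + r i ^ 2 * S)) := by
          refine Finset.sum_nonneg fun i _ => ?_
          have e : (1 + r i ^ 2 * a ^ 2) * (1 + r i ^ 2 * b ^ 2) * (1 + r i ^ 2 * c ^ 2)
            - (1 + r i ^ 2 * S) = r i ^ 4 * (a ^ 2 * b ^ 2 + a ^ 2 * c ^ 2 + b ^ 2 * c ^ 2)
              + r i ^ 6 * (a * b * c) ^ 2 := by rw [hS]; ring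
          rw [e]; positivity
        positivity
    _ = 17280 * X ^ 4 * ((1 + S / 12) ^ 3)⁻¹ := by
        have : (1 + S / 12) ≠ 0 := by positivity
        field_simp
    _ ≤ _ := by
        rw [gmaj_eq, gmaj_eq, gmaj_eq, ← mul_inv, ← mul_inv]
        have : (1 + a ^ 2 / 12) * ((1 + b ^ 2 / 12) * (1 + c ^ 2 / 12)) ≤ (1 + S / 12) ^ 3 := by
          calc _ ≤ (1 + S / 12) * ((1 + S / 12) * (1 + S / 12)) := by gcongr
            _ = _ := by ring
        gcongr

/-- Lemma 5. There are absolute constants `c, C, ε > 0` such that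
whenever `α` has entries in `[0,1]`, some entry equal to `1`, and `‖α‖₂² > c`,
`∫_{ℝ³} |Re φ₁ - ψ₁| ≤ C (‖α‖₃/‖α‖₂)^{3+ε}`. -/
theorem integral_re_phi_sub_psi_bound :
    ∃ c > (0 : ℝ), ∃ C > (0 : ℝ), ∃ ε > (0 : ℝ),
      ∀ (d : ℕ) (α : Fin d → ℝ),
        (∀ i, α i ∈ Set.Icc (0 : ℝ) 1) → (∃ i, α i = 1) →
        nrm 2 α ^ 2 > c →
        (∫ v : ℝ × ℝ × ℝ,
            |(phi1 d α v.1 v.2.1 v.2.2).re - psi1 d α v.1 v.2.1 v.2.2|)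
          ≤ C * (nrm 3 α / nrm 2 α) ^ ((3 : ℝ) + ε) := by
  refine ⟨12, by norm_num, 17280 * (∫ v : ℝ × ℝ × ℝ, gmaj v.1 * (gmaj v.2.1 * gmaj v.2.2)) + 1,
    ?_, 1, one_pos, ?_⟩
  · have : 0 ≤ ∫ v : ℝ × ℝ × ℝ, gmaj v.1 * (gmaj v.2.1 * gmaj v.2.2) := by
      apply integral_nonneg
      intro v
      simp only [gmaj_eq, Pi.zero_apply]
      positivity
    positivity
  intro d α hα _ hN
  have hα0 : ∀ i, 0 ≤ α i := fun i => (hα i).1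
  have hα1 : ∀ i, α i ≤ 1 := fun i => (hα i).2
  have n2 : nrm 2 α ^ 2 = ∑ i, α i ^ 2 := by
    unfold nrm
    have h : 0 ≤ ∑ i, α i ^ 2 := Finset.sum_nonneg fun i _ => by positivity
    rw [← Real.rpow_natCast, ← Real.rpow_mul h]; norm_num
  have h30 : 0 ≤ ∑ i, α i ^ 3 := Finset.sum_nonneg fun i _ => by have := hα0 i; positivity
  have n3 : nrm 3 α ^ 3 = ∑ i, α i ^ 3 := by
    unfold nrm
    rw [← Real.rpow_natCast, ← Real.rpow_mul h30]; norm_num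
  have p2' : 0 ≤ nrm 2 α := Real.rpow_nonneg (Finset.sum_nonneg fun i _ => by positivity) _
  have p3 : 0 ≤ nrm 3 α := Real.rpow_nonneg h30 _
  have p2 : 0 < nrm 2 α := by
    rcases p2'.lt_or_eq with h | h
    · exact h
    · rw [← h] at hN; norm_num at hN
  have m2 : ∀ i, α i ≤ nrm 2 α := fun i => by
    apply le_of_sq_le_sq _ p2'
    rw [n2]
    exact Finset.single_le_sum (f := fun i => α i ^ 2) (fun j _ => by positivity) (Finset.mem_univ i)
  have m3 : ∀ i, α i ≤ nrm 3 α := fun i => by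
    apply le_of_pow_le_pow_left₀ (n := 3) (by norm_num) p3
    rw [n3]
    exact Finset.single_le_sum (f := fun i => α i ^ 3)
      (fun j _ => by have := hα0 j; positivity) (Finset.mem_univ i)
  have s4 : ∑ i, α i ^ 4 ≤ nrm 3 α ^ 4 := by
    calc ∑ i, α i ^ 4 ≤ ∑ i, α i ^ 3 * nrm 3 α := by
          refine Finset.sum_le_sum fun i _ => ?_
          have := hα0 i
          rw [pow_succ]
          exact mul_le_mul_of_nonneg_left (m3 i) (by positivity)
      _ = nrm 3 α ^ 4 := by rw [← Finset.sum_mul, ← n3]; ring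
  have n32 : nrm 3 α ≤ nrm 2 α := by
    apply le_of_pow_le_pow_left₀ (n := 3) (by norm_num) p2'
    calc nrm 3 α ^ 3 ≤ ∑ i, α i ^ 2 * nrm 2 α := by
          rw [n3]
          refine Finset.sum_le_sum fun i _ => ?_
          rw [pow_succ]
          exact mul_le_mul_of_nonneg_left (m2 i) (by positivity)
      _ = nrm 2 α ^ 3 := by rw [← Finset.sum_mul, ← n2]; ring
  set X := nrm 3 α / nrm 2 α with hX
  have hX0 : 0 ≤ X := by positivity
  have hX1 : X ≤ 1 := (div_le_one p2).mpr n32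
  have hpt : ∀ v : ℝ × ℝ × ℝ, |(phi1 d α v.1 v.2.1 v.2.2).re - psi1 d α v.1 v.2.1 v.2.2|
      ≤ 17280 * X ^ 4 * (gmaj v.1 * (gmaj v.2.1 * gmaj v.2.2)) := by
    rintro ⟨a, b, c⟩
    have key := aux_point (fun i => α i / nrm 2 α) X a b c
      (fun i => by have := hα0 i; positivity)
      (fun i => by
        rw [div_pow, div_le_div_iff₀ (by positivity) (by norm_num)]
        have := hα0 i
        have := hα1 i
        nlinarith)
      (by simp only [div_pow]; rw [← Finset.sum_div, ← n2]; exact div_self (by positivity))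
      (by simp only [div_pow, hX]; rw [← Finset.sum_div, ← n3])
      (by simp only [div_pow, hX]; rw [← Finset.sum_div]; gcongr)
      hX0 hX1
    have ephi : phi1 d α a b c = ∏ i, (((1 + (α i / nrm 2 α) ^ 2 * (a ^ 2 + b ^ 2 + c ^ 2) : ℝ) : ℂ)
        + ((2 * (α i / nrm 2 α) ^ 3 * (a * b * c) : ℝ) : ℂ) * Complex.I) ^ (-(1 / 2 : ℂ)) := by
      unfold phi1
      refine Finset.prod_congr rfl fun i _ => ?_
      congr 1
      push_cast
      ring
    have epsi : psi1 d α a b c = ∏ i, ((1 + (α i / nrm 2 α) ^ 2 * a ^ 2) *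
        (1 + (α i / nrm 2 α) ^ 2 * b ^ 2) * (1 + (α i / nrm 2 α) ^ 2 * c ^ 2))
          ^ (-(1 / 2 : ℝ)) := by
      unfold psi1
      refine Finset.prod_congr rfl fun i _ => ?_
      congr 1
      ring
    simp only
    rw [ephi, epsi]
    exact key
  have hint := integral_mono_of_nonneg (μ := (volume : Measure (ℝ × ℝ × ℝ)))
    (Filter.Eventually.of_forall fun v => abs_nonneg _)
    (gmaj3_int.const_mul (17280 * X ^ 4)) (Filter.Eventually.of_forall hpt)
  have hXe : X ^ ((3 : ℝ) + 1) = X ^ 4 := by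
    rw [← Real.rpow_natCast]; norm_num
  rw [hXe]
  refine hint.trans ?_
  rw [integral_const_mul]
  have : 0 ≤ X ^ 4 := by positivity
  nlinarith

end
end
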